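/- arXiv:math-ph/0306059 — 6 statements merged into one kernel-verified Lean document; each statement's English description precedes it below -/
import Mathlib

section
/- Let n ≥ 1 and r ≥ 1, and let g, g' : Fin r → U(n). If for every word w ∈ FreeGroup(Fin r) the elements w(g) and w(g') are conjugate in U(n), then g and g' are diagonally conjugate, i.e. there exists k ∈ U(n) such that g'(i) = k · g(i) · k⁻¹ for all i. -/
open Module

theorem semisimple_prod {R V V' : Type*} [Ring R] [AddCommGroup V] [Module R V]
    [AddCommGroup V'] [Module R V'] [IsSemisimpleModule R V] [IsSemisimpleModule R V'] :
    IsSemisimpleModule R (V × V') := by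
  have h1 : IsSemisimpleModule R (LinearMap.range (LinearMap.inl R V V')) := .range _
  have h2 : IsSemisimpleModule R (LinearMap.range (LinearMap.inr R V V')) := .range _
  have h3 := IsSemisimpleModule.sup h1 h2
  rw [LinearMap.sup_range_inl_inr] at h3
  exact IsSemisimpleModule.congr (Submodule.topEquiv (R := R) (M := V × V')).symm

theorem fi_compl {R M : Type*} [Ring R] [AddCommGroup M] [Module R M] [IsSemisimpleModule R M]
    (N : Submodule R M) (hN : N.IsFullyInvariant) :
    ∃ N' : Submodule R M, N'.IsFullyInvariant ∧ IsCompl N N' := by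
  have : ComplementedLattice (fullyInvariantSubmodule R M) :=
    (OrderIso.complementedLattice_iff (OrderIso.setIsotypicComponents (R := R) (M := M))).1
      inferInstance
  obtain ⟨⟨N', h'⟩, hc⟩ := exists_isCompl (⟨N, hN⟩ : fullyInvariantSubmodule R M)
  refine ⟨N', h', ?_, ?_⟩
  · have := hc.inf_eq_bot
    rw [disjoint_iff]
    exact congrArg Subtype.val this
  · have := hc.sup_eq_top
    rw [codisjoint_iff]
    exact congrArg Subtype.val this

theorem exists_proj {R M : Type*} [Ring R] [Algebra ℂ R] [AddCommGroup M] [Module R M]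
    [Module ℂ M] [IsScalarTower ℂ R M] [FiniteDimensional ℂ M]
    [IsSemisimpleModule R M]
    (N : Submodule R M) (hN : N.IsFullyInvariant) :
    ∃ r : R, (∀ m, r • m ∈ N) ∧ ∀ m ∈ N, r • m = m := by
  obtain ⟨N', hN', hc⟩ := fi_compl N hN
  let p : End R M := N.projection N' hc
  have hcomm : ∀ φ : End R M, ∀ m, p (φ m) = φ (p m) := by
    intro φ m
    obtain ⟨a, ha, b, hb, rfl⟩ : ∃ a ∈ N, ∃ b ∈ N', a + b = m := by
      have : m ∈ N ⊔ N' := by rw [hc.sup_eq_top]; trivial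
      exact Submodule.mem_sup.1 this
    have h1 : ∀ a ∈ N, p a = a := fun a ha => Submodule.projection_apply_left hc ⟨a, ha⟩
    have h2 : ∀ b ∈ N', p b = 0 := fun b hb => (Submodule.projection_apply_eq_zero_iff hc).2 hb
    simp only [map_add, h1 a ha, h2 b hb, h1 _ (hN φ ha), h2 _ (hN' φ hb), map_zero]
  let f : End (End R M) M :=
    { toFun := p, map_add' := map_add p, map_smul' := fun φ m => hcomm φ m }
  let b := Module.finBasis ℂ M
  classical
  obtain ⟨r, hr⟩ := jacobson_density f (Finset.univ.image b)
  have key : ∀ m, p m = r • m := by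
    have : (p.restrictScalars ℂ) = Algebra.lsmul ℂ ℂ M r := by
      apply b.ext
      intro i
      exact hr (b i) (by simp)
    intro m
    exact congrArg (fun q => q m) this
  refine ⟨r, fun m => ?_, fun m hm => ?_⟩
  · rw [← key]; exact Submodule.projection_apply_mem hc m
  · rw [← key]; exact Submodule.projection_apply_left hc ⟨m, hm⟩

theorem exists_hom {R V V' : Type*} [Ring R] [Algebra ℂ R]
    [AddCommGroup V] [Module R V] [Module ℂ V] [IsScalarTower ℂ R V] [FiniteDimensional ℂ V]
    [IsSemisimpleModule R V]
    [AddCommGroup V'] [Module R V'] [Module ℂ V'] [IsScalarTower ℂ R V'] [FiniteDimensional ℂ V']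
    [IsSemisimpleModule R V']
    (h : ∀ r : R, LinearMap.trace ℂ V (Algebra.lsmul ℂ ℂ V r) =
      LinearMap.trace ℂ V' (Algebra.lsmul ℂ ℂ V' r))
    (W : Submodule R V) [IsSimpleModule R W] :
    ∃ W' : Submodule R V', Nonempty (W ≃ₗ[R] W') := by
  have hss : IsSemisimpleModule R (V × V') := semisimple_prod
  obtain ⟨r, hr1, hr2⟩ := exists_proj (isotypicComponent R (V × V') W)
    (Submodule.IsFullyInvariant.isotypicComponent R (V × V') W)
  have hWN : ∀ w ∈ W, ((w, 0) : V × V') ∈ isotypicComponent R (V × V') W := by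
    intro w hw
    have : W.map (LinearMap.inl R V V') ≤ isotypicComponent R (V × V') W :=
      le_sSup ⟨(W.equivMapOfInjective _ LinearMap.inl_injective).symm⟩
    exact this ⟨w, hw, rfl⟩
  by_contra hno
  let J : Submodule R V' := (isotypicComponent R (V × V') W).comap (LinearMap.inr R V V')
  have hJ : J = ⊥ := by
    rcases IsSemisimpleModule.eq_bot_or_exists_simple_le J with h0 | ⟨S, hS, hs⟩
    · exact h0
    · exfalso
      apply hno
      have hle : S.map (LinearMap.inr R V V') ≤ isotypicComponent R (V × V') W :=
        Submodule.map_le_iff_le_comap.2 hS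
      let e := S.equivMapOfInjective (LinearMap.inr R V V') LinearMap.inr_injective
      have : IsSimpleModule R (S.map (LinearMap.inr R V V')) := IsSimpleModule.congr e.symm
      obtain ⟨e'⟩ := isIsotypicOfType_submodule_iff.1
        (IsIsotypicOfType.isotypicComponent R (V × V') W) _ hle
      exact ⟨S, ⟨(e.trans e').symm⟩⟩
  have hV' : Algebra.lsmul ℂ ℂ V' r = 0 := by
    ext v
    have : r • v ∈ J := by simpa [J] using hr1 (0, v)
    rw [hJ] at this
    simpa using this
  have hV : IsIdempotentElem (Algebra.lsmul ℂ ℂ V r) := by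
    ext v
    have := hr2 _ (hr1 (v, 0))
    simpa using congrArg Prod.fst this
  have h0 := h r
  rw [hV', map_zero] at h0
  have hz := LinearMap.IsIdempotentElem.eq_zero_of_trace_eq_zero hV h0
  have : W = ⊥ := by
    rw [eq_bot_iff]
    intro w hw
    have h1 := congrArg Prod.fst (hr2 _ (hWN w hw))
    have h2 : r • w = 0 := congrArg (fun q => q w) hz
    simp only [Prod.smul_fst] at h1
    rw [h2] at h1
    simp [← h1]
  have hnt : Nontrivial W := IsSimpleModule.nontrivial R W
  rw [Submodule.nontrivial_iff_ne_bot] at hnt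
  exact hnt this

theorem trace_compl {R V : Type*} [Ring R] [Algebra ℂ R]
    [AddCommGroup V] [Module R V] [Module ℂ V] [IsScalarTower ℂ R V] [FiniteDimensional ℂ V]
    (W C : Submodule R V) (hc : IsCompl W C) (r : R) :
    LinearMap.trace ℂ V (Algebra.lsmul ℂ ℂ V r) =
      LinearMap.trace ℂ W (Algebra.lsmul ℂ ℂ W r) + LinearMap.trace ℂ C (Algebra.lsmul ℂ ℂ C r) := by
  have : FiniteDimensional ℂ W := inferInstanceAs (FiniteDimensional ℂ (W.restrictScalars ℂ))
  have : FiniteDimensional ℂ C := inferInstanceAs (FiniteDimensional ℂ (C.restrictScalars ℂ))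
  rw [← LinearMap.trace_prodMap', ← LinearMap.trace_conj' _
    ((Submodule.prodEquivOfIsCompl W C hc).restrictScalars ℂ)]
  congr 1
  ext v
  obtain ⟨x, rfl⟩ := (Submodule.prodEquivOfIsCompl W C hc).surjective v
  simp [LinearEquiv.conj_apply]

theorem trace_congr {R V V' : Type*} [Ring R] [Algebra ℂ R]
    [AddCommGroup V] [Module R V] [Module ℂ V] [IsScalarTower ℂ R V]
    [AddCommGroup V'] [Module R V'] [Module ℂ V'] [IsScalarTower ℂ R V']
    (e : V ≃ₗ[R] V') (r : R) :
    LinearMap.trace ℂ V (Algebra.lsmul ℂ ℂ V r) =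
      LinearMap.trace ℂ V' (Algebra.lsmul ℂ ℂ V' r) := by
  rw [← LinearMap.trace_conj' _ (e.restrictScalars ℂ)]
  congr 1
  ext v
  simp [LinearEquiv.conj_apply]

theorem equiv_of_trace {R : Type*} [Ring R] [Algebra ℂ R] (d : ℕ) : ∀ (V V' : Type)
    [AddCommGroup V] [Module R V] [Module ℂ V] [IsScalarTower ℂ R V] [FiniteDimensional ℂ V]
    [IsSemisimpleModule R V]
    [AddCommGroup V'] [Module R V'] [Module ℂ V'] [IsScalarTower ℂ R V'] [FiniteDimensional ℂ V']
    [IsSemisimpleModule R V']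
    (_ : finrank ℂ V = d)
    (_ : ∀ r : R, LinearMap.trace ℂ V (Algebra.lsmul ℂ ℂ V r) =
      LinearMap.trace ℂ V' (Algebra.lsmul ℂ ℂ V' r)), Nonempty (V ≃ₗ[R] V') := by
  induction d using Nat.strong_induction_on with
  | _ d ih =>
  intro V V' _ _ _ _ _ _ _ _ _ _ _ _ hd h
  rcases IsSemisimpleModule.eq_bot_or_exists_simple_le (⊤ : Submodule R V) with h0 | ⟨W, -, hW⟩
  · have hs : Subsingleton V := (Submodule.subsingleton_iff R).1 (subsingleton_of_bot_eq_top h0.symm)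
    have hf : finrank ℂ V = finrank ℂ V' := by
      have := h 1
      rw [map_one (Algebra.lsmul ℂ ℂ V), map_one (Algebra.lsmul ℂ ℂ V'), LinearMap.trace_one,
        LinearMap.trace_one] at this
      exact_mod_cast this
    have hs' : Subsingleton V' := by
      rw [← finrank_zero_iff (R := ℂ), ← hf]
      exact finrank_zero_of_subsingleton
    exact ⟨LinearEquiv.ofSubsingleton V V'⟩
  · obtain ⟨W', ⟨e⟩⟩ := exists_hom h W
    obtain ⟨C, hC⟩ := exists_isCompl W
    obtain ⟨C', hC'⟩ := exists_isCompl W'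
    have fC : FiniteDimensional ℂ C := inferInstanceAs (FiniteDimensional ℂ (C.restrictScalars ℂ))
    have fC' : FiniteDimensional ℂ C' :=
      inferInstanceAs (FiniteDimensional ℂ (C'.restrictScalars ℂ))
    have hlt : finrank ℂ C < d := by
      rw [← hd]
      have : C.restrictScalars ℂ < ⊤ := by
        rw [lt_top_iff_ne_top]
        intro ht
        have ht' : C = ⊤ := by
          rw [eq_top_iff]; intro x _
          have : x ∈ C.restrictScalars ℂ := by rw [ht]; trivial
          exact this
        have hnt : Nontrivial W := IsSimpleModule.nontrivial R W
        rw [Submodule.nontrivial_iff_ne_bot] at hnt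
        apply hnt
        have := hC.inf_eq_bot
        rwa [ht', inf_top_eq] at this
      exact Submodule.finrank_lt this.ne
    obtain ⟨e2⟩ := ih _ hlt C C' rfl (by
      intro r
      have h1 := h r
      rw [trace_compl W C hC, trace_compl W' C' hC', trace_congr e] at h1
      exact add_left_cancel h1)
    exact ⟨(Submodule.prodEquivOfIsCompl W C hC).symm.trans
      ((e.prodCongr e2).trans (Submodule.prodEquivOfIsCompl W' C' hC'))⟩

open scoped MatrixOrder Matrix Matrix.Norms.L2Operator in
theorem polar {n r : ℕ} (g g' : Fin r → Matrix.unitaryGroup (Fin n) ℂ)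
    (T : Matrix (Fin n) (Fin n) ℂ) (hT : IsUnit T)
    (h : ∀ i, (g' i : Matrix (Fin n) (Fin n) ℂ) * T = T * (g i : Matrix (Fin n) (Fin n) ℂ)) :
    ∃ k : Matrix.unitaryGroup (Fin n) ℂ, ∀ i : Fin r, g' i = k * g i * k⁻¹ := by
  have hpos : 0 ≤ star T * T := star_mul_self_nonneg T
  set s := CFC.sqrt (star T * T) with hs
  have hss : s * s = star T * T := CFC.sqrt_mul_sqrt_self _ hpos
  have hsa : star s = s := (CFC.sqrt_nonneg (star T * T)).isSelfAdjoint
  have hsu : IsUnit s := by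
    have h1 : IsUnit (s * s) := by rw [hss]; exact hT.star.mul hT
    exact isUnit_of_mul_isUnit_left h1
  have hcomm : ∀ i, Commute s (g i : Matrix (Fin n) (Fin n) ℂ) := by
    intro i
    have h1 : Commute (star T * T) (g i : Matrix (Fin n) (Fin n) ℂ) := by
      have h2 := congrArg star (h i)
      rw [star_mul, star_mul] at h2
      have hg : (g i : Matrix (Fin n) (Fin n) ℂ) * star (g i : Matrix (Fin n) (Fin n) ℂ) = 1 :=
        Unitary.mul_star_self_of_mem (g i).2
      have hg' : star (g' i : Matrix (Fin n) (Fin n) ℂ) * (g' i : Matrix (Fin n) (Fin n) ℂ) = 1 :=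
        Unitary.star_mul_self_of_mem (g' i).2
      have h3 : star T * (g' i : Matrix (Fin n) (Fin n) ℂ) = (g i : Matrix (Fin n) (Fin n) ℂ) * star T := by
        calc _ = (g i : Matrix (Fin n) (Fin n) ℂ) * (star (g i : Matrix (Fin n) (Fin n) ℂ) * star T) * (g' i : Matrix (Fin n) (Fin n) ℂ) := by
              rw [← mul_assoc, hg, one_mul]
          _ = _ := by rw [← h2, mul_assoc, mul_assoc, hg', mul_one]
      show _ = _
      rw [mul_assoc, ← h i, ← mul_assoc, h3, mul_assoc]
    exact h1.cfcₙ_nnreal _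
  obtain ⟨u, hu⟩ := hsu
  have hui : s * (↑u⁻¹ : Matrix (Fin n) (Fin n) ℂ) = 1 := by rw [← hu]; simp
  have hiu : (↑u⁻¹ : Matrix (Fin n) (Fin n) ℂ) * s = 1 := by rw [← hu]; simp
  have hstar : star (↑u⁻¹ : Matrix (Fin n) (Fin n) ℂ) * s = 1 := by
    have := congrArg star hui
    rwa [star_mul, hsa, star_one] at this
  have hk : T * (↑u⁻¹ : Matrix (Fin n) (Fin n) ℂ) ∈ Matrix.unitaryGroup (Fin n) ℂ := by
    rw [Matrix.mem_unitaryGroup_iff']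
    calc _ = star (↑u⁻¹ : Matrix (Fin n) (Fin n) ℂ) * (star T * T) * (↑u⁻¹ : Matrix (Fin n) (Fin n) ℂ) := by
          rw [star_mul]; simp only [mul_assoc]
      _ = 1 := by rw [← hss, ← mul_assoc, hstar, one_mul, hui]
  refine ⟨⟨_, hk⟩, fun i => ?_⟩
  rw [eq_mul_inv_iff_mul_eq]
  apply Subtype.ext
  show (g' i : Matrix (Fin n) (Fin n) ℂ) * (T * _) = T * _ * (g i : Matrix (Fin n) (Fin n) ℂ)
  have hc : Commute (↑u⁻¹ : Matrix (Fin n) (Fin n) ℂ) (g i : Matrix (Fin n) (Fin n) ℂ) := by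
    have := hcomm i
    rw [← hu] at this
    exact this.units_inv_left
  rw [← mul_assoc, h i, mul_assoc, mul_assoc, hc.eq]

noncomputable def urep {n r : ℕ} (g : Fin r → Matrix.unitaryGroup (Fin n) ℂ) :
    Representation ℂ (FreeGroup (Fin r)) (EuclideanSpace ℂ (Fin n)) where
  toFun w := Matrix.toEuclideanLin (FreeGroup.lift g w : Matrix (Fin n) (Fin n) ℂ)
  map_one' := by ext; simp
  map_mul' x y := by ext; simp [Matrix.mulVec_mulVec]

theorem urep_adj {n r : ℕ} (g : Fin r → Matrix.unitaryGroup (Fin n) ℂ) (w : FreeGroup (Fin r))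
    (x y : EuclideanSpace ℂ (Fin n)) :
    inner ℂ x (urep g w y) = inner ℂ (urep g w⁻¹ x) y := by
  have : urep g w⁻¹ = LinearMap.adjoint (urep g w) := by
    show Matrix.toEuclideanLin (FreeGroup.lift g w⁻¹ : Matrix (Fin n) (Fin n) ℂ) =
      LinearMap.adjoint (Matrix.toEuclideanLin (FreeGroup.lift g w : Matrix (Fin n) (Fin n) ℂ))
    rw [← Matrix.toEuclideanLin_conjTranspose_eq_adjoint, map_inv]
    rfl
  rw [this, LinearMap.adjoint_inner_left]

theorem urep_ss {n r : ℕ} (g : Fin r → Matrix.unitaryGroup (Fin n) ℂ) :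
    IsSemisimpleModule (MonoidAlgebra ℂ (FreeGroup (Fin r))) (urep g).asModule := by
  rw [← Representation.isSemisimpleRepresentation_iff_isSemisimpleModule_asModule]
  refine ⟨fun W => ⟨⟨W.toSubmoduleᗮ, ?_⟩, ?_⟩⟩
  · intro w v hv
    rw [Submodule.mem_orthogonal] at hv ⊢
    intro u hu
    rw [urep_adj]
    exact hv _ (W.apply_mem_toSubmodule _ hu)
  · have hc := Submodule.isCompl_orthogonal (K := W.toSubmodule)
    constructor
    · rw [disjoint_iff]
      exact Subrepresentation.toSubmodule_injective hc.inf_eq_bot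
    · rw [codisjoint_iff]
      exact Subrepresentation.toSubmodule_injective hc.sup_eq_top

theorem urep_trace {n r : ℕ} (g : Fin r → Matrix.unitaryGroup (Fin n) ℂ) (w : FreeGroup (Fin r)) :
    LinearMap.trace ℂ (urep g).asModule (Algebra.lsmul ℂ ℂ (urep g).asModule
      (MonoidAlgebra.of ℂ _ w)) = Matrix.trace (FreeGroup.lift g w : Matrix (Fin n) (Fin n) ℂ) := by
  have h1 : Algebra.lsmul ℂ ℂ (urep g).asModule (MonoidAlgebra.of ℂ _ w) = urep g w := by
    ext v
    have := Representation.single_smul (ρ := urep g) (1 : ℂ) w v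
    rw [one_smul] at this
    exact this
  rw [h1]
  show LinearMap.trace ℂ (EuclideanSpace ℂ (Fin n)) (Matrix.toEuclideanLin _) = _
  rw [Matrix.toEuclideanLin_eq_toLin_orthonormal, Matrix.trace_toLin_eq]

/-- **Wilson loops determine the diagonal conjugacy class in `U(n)`.**
If `g, g' : Fin r → U(n)` are such that for every word `w` in the free group on `r`
generators the elements `w(g)` and `w(g')` are conjugate in `U(n)`, then `g` and `g'`
are diagonally conjugate. -/
theorem wilson_words_determine_diagonal_conjugacy_unitary
    (n r : ℕ) (hn : 1 ≤ n) (hr : 1 ≤ r)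
    (g g' : Fin r → Matrix.unitaryGroup (Fin n) ℂ)
    (h : ∀ w : FreeGroup (Fin r), ∃ k : Matrix.unitaryGroup (Fin n) ℂ,
      FreeGroup.lift g' w = k * FreeGroup.lift g w * k⁻¹) :
    ∃ k : Matrix.unitaryGroup (Fin n) ℂ, ∀ i : Fin r, g' i = k * g i * k⁻¹ := by
  have := urep_ss g
  have := urep_ss g'
  have htr : ∀ x : MonoidAlgebra ℂ (FreeGroup (Fin r)),
      LinearMap.trace ℂ (urep g).asModule (Algebra.lsmul ℂ ℂ (urep g).asModule x) =
      LinearMap.trace ℂ (urep g').asModule (Algebra.lsmul ℂ ℂ (urep g').asModule x) := by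
    intro x
    induction x using MonoidAlgebra.induction_on with
    | of w =>
      rw [urep_trace, urep_trace]
      obtain ⟨k, hk⟩ := h w
      rw [hk]
      have hkk : star (k : Matrix (Fin n) (Fin n) ℂ) * (k : Matrix (Fin n) (Fin n) ℂ) = 1 :=
        Unitary.star_mul_self_of_mem k.2
      show _ = Matrix.trace ((k : Matrix (Fin n) (Fin n) ℂ) * _ * star (k : Matrix (Fin n) (Fin n) ℂ))
      rw [Matrix.trace_mul_comm, ← mul_assoc, hkk, one_mul]
    | add x y hx hy => simp only [map_add, hx, hy]
    | smul c x hx => simp only [map_smul, hx]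
  obtain ⟨e⟩ := equiv_of_trace _ (urep g).asModule (urep g').asModule rfl htr
  let e' : EuclideanSpace ℂ (Fin n) ≃ₗ[ℂ] EuclideanSpace ℂ (Fin n) := e.restrictScalars ℂ
  have he : ∀ w v, e' (urep g w v) = urep g' w (e' v) := by
    intro w v
    have h1 := e.map_smul (MonoidAlgebra.single w (1 : ℂ)) v
    have h2 := Representation.single_smul (ρ := urep g) (1 : ℂ) w v
    have h3 := Representation.single_smul (ρ := urep g') (1 : ℂ) w (e v)
    rw [one_smul] at h2 h3
    exact (congrArg e h2).symm.trans (h1.trans h3)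
  let T : Matrix (Fin n) (Fin n) ℂ := Matrix.toEuclideanLin.symm e'.toLinearMap
  let S : Matrix (Fin n) (Fin n) ℂ := Matrix.toEuclideanLin.symm e'.symm.toLinearMap
  have hTe : ∀ v, Matrix.toEuclideanLin T v = e' v := by
    intro v; simp [T]
  have hSe : ∀ v, Matrix.toEuclideanLin S v = e'.symm v := by
    intro v; simp [S]
  have hmul : ∀ (A B : Matrix (Fin n) (Fin n) ℂ) v, Matrix.toEuclideanLin (A * B) v =
      Matrix.toEuclideanLin A (Matrix.toEuclideanLin B v) := by
    intro A B v; ext; simp [Matrix.mulVec_mulVec]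
  refine polar g g' T ?_ ?_
  · have hTS : T * S = 1 := by
      apply Matrix.toEuclideanLin.injective
      refine LinearMap.ext fun v => ?_
      rw [hmul, hTe, hSe]
      simp
    exact IsUnit.of_mul_eq_one S hTS
  · intro i
    apply Matrix.toEuclideanLin.injective
    refine LinearMap.ext fun v => ?_
    rw [hmul, hmul, hTe, hTe]
    have h1 := he (FreeGroup.of i) v
    have h2 : ∀ g : Fin r → Matrix.unitaryGroup (Fin n) ℂ, urep g (FreeGroup.of i) =
        Matrix.toEuclideanLin (g i : Matrix (Fin n) (Fin n) ℂ) := by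
      intro g
      show Matrix.toEuclideanLin _ = _
      rw [FreeGroup.lift_apply_of]
    rw [h2, h2] at h1
    exact h1.symm
end

section
/- Let n ≥ 1 and r ≥ 1, and let g, g' : Fin r → O(n). If for every word w ∈ FreeGroup(Fin r) the elements w(g) and w(g') are conjugate in O(n), then g and g' are diagonally conjugate, i.e. there exists k ∈ O(n) such that g'(i) = k · g(i) · k⁻¹ for all i. (This includes the case of even orthogonal groups O(2m).) -/
open Matrix

namespace WilsonAux

/-- The Frobenius form on pairs of matrices. -/
noncomputable def pairForm (n : ℕ) : LinearMap.BilinForm ℝ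
    (Matrix (Fin n) (Fin n) ℝ × Matrix (Fin n) (Fin n) ℝ) :=
  LinearMap.mk₂ ℝ (fun a b => trace (a.1ᵀ * b.1) + trace (a.2ᵀ * b.2))
    (by intro a b c; simp [add_mul]; ring)
    (by intro a b c; simp [mul_add])
    (by intro a b c; simp [mul_add]; ring)
    (by intro a b c; simp [mul_add])

theorem pairForm_apply {n : ℕ} (a b : Matrix (Fin n) (Fin n) ℝ × Matrix (Fin n) (Fin n) ℝ) :
    pairForm n a b = trace (a.1ᵀ * b.1) + trace (a.2ᵀ * b.2) := rfl

theorem trace_tmul_nonneg {n : ℕ} (a : Matrix (Fin n) (Fin n) ℝ) : 0 ≤ trace (aᵀ * a) := by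
  simp only [trace, diag_apply, mul_apply, transpose_apply]
  exact Finset.sum_nonneg fun i _ => Finset.sum_nonneg fun j _ => mul_self_nonneg _

theorem trace_tmul_eq_zero {n : ℕ} {a : Matrix (Fin n) (Fin n) ℝ}
    (h : trace (aᵀ * a) = 0) : a = 0 := by
  have := (trace_conjTranspose_mul_self_eq_zero_iff (A := a)).1
  simpa [conjTranspose_eq_transpose_of_trivial, h] using this

theorem pairForm_symm {n : ℕ} (a b : Matrix (Fin n) (Fin n) ℝ × Matrix (Fin n) (Fin n) ℝ) :
    pairForm n a b = pairForm n b a := by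
  rw [pairForm_apply, pairForm_apply, ← trace_transpose (a.1ᵀ * b.1),
    ← trace_transpose (a.2ᵀ * b.2)]
  simp

theorem pairForm_self {n : ℕ} {a : Matrix (Fin n) (Fin n) ℝ × Matrix (Fin n) (Fin n) ℝ}
    (h : pairForm n a a = 0) : a = 0 := by
  rw [pairForm_apply] at h
  have h1 := trace_tmul_nonneg a.1
  have h2 := trace_tmul_nonneg a.2
  exact Prod.ext (trace_tmul_eq_zero (by linarith)) (trace_tmul_eq_zero (by linarith))

theorem exists_proj {n : ℕ}
    (B : Submodule ℝ (Matrix (Fin n) (Fin n) ℝ × Matrix (Fin n) (Fin n) ℝ)) :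
    ∃ P : (Matrix (Fin n) (Fin n) ℝ × Matrix (Fin n) (Fin n) ℝ) →ₗ[ℝ]
        (Matrix (Fin n) (Fin n) ℝ × Matrix (Fin n) (Fin n) ℝ),
      (∀ z, P z ∈ B) ∧ (∀ z, ∀ b ∈ B, pairForm n (z - P z) b = 0) := by
  have hrefl : (pairForm n).IsRefl := fun a b h => by rw [pairForm_symm]; exact h
  have hc : IsCompl B ((pairForm n).orthogonal B) := by
    rw [LinearMap.BilinForm.isCompl_orthogonal_iff_disjoint hrefl, Submodule.disjoint_def]
    intro x hx hx'
    exact pairForm_self (hx' x hx)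
  refine ⟨B.subtype ∘ₗ B.projectionOnto _ hc, fun z => ?_, fun z b hb => ?_⟩
  · simp
  · have : z - (B.subtype ∘ₗ B.projectionOnto _ hc) z ∈ (pairForm n).orthogonal B := by
      have hk := Submodule.ker_projectionOnto hc
      refine hk.le (LinearMap.mem_ker.2 ?_)
      rw [map_sub, sub_eq_zero]
      exact (Submodule.projectionOnto_apply_left hc _).symm
    rw [pairForm_symm]
    exact this b hb

/-- Extracting a matrix from a linear map on matrices. -/
noncomputable def extr {n : ℕ} (ψ : Matrix (Fin n) (Fin n) ℝ →ₗ[ℝ] Matrix (Fin n) (Fin n) ℝ)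
    (k l : Fin n) : Matrix (Fin n) (Fin n) ℝ :=
  Matrix.of fun a j => ψ (Matrix.single j k 1) a l

theorem extr_comm {n : ℕ} (ψ : Matrix (Fin n) (Fin n) ℝ →ₗ[ℝ] Matrix (Fin n) (Fin n) ℝ)
    (k l : Fin n) (M N : Matrix (Fin n) (Fin n) ℝ) (h : ∀ Z, ψ (M * Z) = N * ψ Z) :
    extr ψ k l * M = N * extr ψ k l := by
  ext a c
  have h1 : M * Matrix.single c k 1 = ∑ j, M j c • Matrix.single j k (1 : ℝ) := by
    ext x y
    simp only [Matrix.mul_apply, Matrix.sum_apply, Matrix.smul_apply, Matrix.single_apply]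
    by_cases hy : k = y <;> simp [hy]
  have h2 := congrFun (congrFun (h (Matrix.single c k 1)) a) l
  rw [h1, map_sum] at h2
  simp only [map_smul, Matrix.sum_apply, Matrix.smul_apply, smul_eq_mul] at h2
  simp only [Matrix.mul_apply, extr, Matrix.of_apply]
  rw [Matrix.mul_apply] at h2
  rw [← h2]
  exact Finset.sum_congr rfl fun j _ => mul_comm _ _

theorem exists_extr_ne {n : ℕ} (ψ : Matrix (Fin n) (Fin n) ℝ →ₗ[ℝ] Matrix (Fin n) (Fin n) ℝ)
    (h : ψ ≠ 0) : ∃ k l, extr ψ k l ≠ 0 := by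
  by_contra! hc
  apply h
  apply LinearMap.ext
  intro Z
  rw [LinearMap.zero_apply, Matrix.matrix_eq_sum_single Z]
  simp only [map_sum]
  apply Finset.sum_eq_zero
  intro j _
  apply Finset.sum_eq_zero
  intro k _
  have : Matrix.single j k (Z j k) = Z j k • Matrix.single j k (1 : ℝ) := by simp
  rw [this, map_smul]
  have h0 : ψ (Matrix.single j k 1) = 0 := by
    ext a l
    exact congrFun (congrFun (hc k l) a) j
  rw [h0, smul_zero]

section
variable {G : Type*} [Group G] {n : ℕ}

theorem exists_intertwiner (u v : G →* orthogonalGroup (Fin n) ℝ)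
    (p q : Matrix (Fin n) (Fin n) ℝ) (hp0 : p ≠ 0)
    (hp : p * p = p) (hpt : pᵀ = p) (hq : q * q = q) (hqt : qᵀ = q)
    (hpu : ∀ g, p * (u g).1 = (u g).1 * p) (hqv : ∀ g, q * (v g).1 = (v g).1 * q)
    (htr : ∀ g, trace (p * (u g).1) = trace (q * (v g).1)) :
    ∃ X : Matrix (Fin n) (Fin n) ℝ, X ≠ 0 ∧ (∀ g, X * (u g).1 = (v g).1 * X) ∧
      X * p = X ∧ q * X = X := by
  have hut : ∀ (w : G →* orthogonalGroup (Fin n) ℝ) g, (w g).1ᵀ = (w g⁻¹).1 := by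
    intro w g; rw [map_inv]; rfl
  have hmul : ∀ (w : G →* orthogonalGroup (Fin n) ℝ) g h, (w g).1 * (w h).1 = (w (g * h)).1 := by
    intro w g h; rw [map_mul]; rfl
  have hone : ∀ (w : G →* orthogonalGroup (Fin n) ℝ), (w 1).1 = 1 := by
    intro w; rw [map_one]; rfl
  let a : G → Matrix (Fin n) (Fin n) ℝ × Matrix (Fin n) (Fin n) ℝ :=
    fun g => (p * (u g).1, q * (v g).1)
  let B := Submodule.span ℝ (Set.range a)
  let L : G → (Matrix (Fin n) (Fin n) ℝ × Matrix (Fin n) (Fin n) ℝ) →ₗ[ℝ]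
      (Matrix (Fin n) (Fin n) ℝ × Matrix (Fin n) (Fin n) ℝ) := fun g =>
    LinearMap.prodMap (LinearMap.mulLeft ℝ (u g).1) (LinearMap.mulLeft ℝ (v g).1)
  have hL : ∀ g z, L g z = ((u g).1 * z.1, (v g).1 * z.2) := fun g z => rfl
  have hLB : ∀ g, ∀ b ∈ B, L g b ∈ B := by
    intro g b hb
    have : B ≤ B.comap (L g) := by
      refine Submodule.span_le.2 ?_
      rintro _ ⟨h, rfl⟩
      refine Submodule.subset_span ⟨g * h, ?_⟩
      simp only [a, hL]
      rw [← hmul, ← hmul, ← mul_assoc, ← mul_assoc, hpu, hqv, mul_assoc, mul_assoc]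
    exact this hb
  have hBp : ∀ b ∈ B, p * b.1 = b.1 ∧ q * b.2 = b.2 := by
    intro b hb
    refine Submodule.span_induction ?_ ?_ ?_ ?_ hb
    · rintro _ ⟨h, rfl⟩
      simp only [a, ← mul_assoc, hp, hq, and_self]
    · simp
    · rintro x y - - ⟨h1, h2⟩ ⟨h3, h4⟩
      simp [mul_add, h1, h2, h3, h4]
    · rintro c x - ⟨h1, h2⟩
      simp [h1, h2]
  have hBB : ∀ b ∈ B, ∀ c ∈ B, trace (b.1ᵀ * c.1) = trace (b.2ᵀ * c.2) := by
    intro b hb c hc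
    refine Submodule.span_induction₂ (p := fun b c _ _ => trace (b.1ᵀ * c.1) = trace (b.2ᵀ * c.2))
      ?_ ?_ ?_ ?_ ?_ ?_ ?_ hb hc
    · rintro _ _ ⟨g, rfl⟩ ⟨h, rfl⟩
      have key : ∀ (w : G →* orthogonalGroup (Fin n) ℝ) (s : Matrix (Fin n) (Fin n) ℝ),
          s * s = s → sᵀ = s → trace ((s * (w g).1)ᵀ * (s * (w h).1)) =
            trace (s * (w (h * g⁻¹)).1) := by
        intro w s h1 h2
        rw [transpose_mul, h2, hut, ← hmul, mul_assoc, ← mul_assoc s s, h1, trace_mul_comm,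
          mul_assoc]
      simp only [a]
      rw [key u p hp hpt, key v q hq hqt, htr]
    · simp
    · simp
    · intro x y z _ _ _ h1 h2; simp [add_mul, h1, h2]
    · intro x y z _ _ _ h1 h2; simp [mul_add, h1, h2]
    · intro r x y _ _ h1; simp [h1]
    · intro r x y _ _ h1; simp [h1]
  obtain ⟨P, hPB, hPo⟩ := exists_proj B
  have huniq : ∀ z w, w ∈ B → (∀ b ∈ B, pairForm n (z - w) b = 0) → P z = w := by
    intro z w hw hzw
    rw [← sub_eq_zero]
    have hm : P z - w ∈ B := B.sub_mem (hPB z) hw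
    apply pairForm_self
    have e : pairForm n (P z - w) (P z - w) =
        pairForm n (z - w) (P z - w) - pairForm n (z - P z) (P z - w) := by
      rw [← LinearMap.sub_apply, ← map_sub]
      congr 2
      abel
    rw [e, hzw _ hm, hPo _ _ hm, sub_zero]
  have hLadj : ∀ g z b, pairForm n (L g z) b = pairForm n z (L g⁻¹ b) := by
    intro g z b
    simp only [pairForm_apply, hL, transpose_mul, hut, mul_assoc]
  have hPL : ∀ g z, P (L g z) = L g (P z) := by
    intro g z
    refine huniq _ _ (hLB g _ (hPB z)) fun b hb => ?_
    rw [← map_sub, hLadj]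
    exact hPo _ _ (hLB _ _ hb)
  have hPp : ∀ Z, P (p * Z, 0) = P (Z, 0) := by
    intro Z
    refine huniq _ _ (hPB _) fun b hb => ?_
    have e : pairForm n ((p * Z, 0) - P (Z, 0)) b = pairForm n ((Z, 0) - P (Z, 0)) b +
        (pairForm n (p * Z, 0) b - pairForm n (Z, 0) b) := by
      simp only [map_sub, LinearMap.sub_apply]; ring
    rw [e, hPo _ _ hb]
    simp only [pairForm_apply, transpose_mul, hpt, mul_assoc, (hBp b hb).1]
    simp
  let ψ : Matrix (Fin n) (Fin n) ℝ →ₗ[ℝ] Matrix (Fin n) (Fin n) ℝ :=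
    LinearMap.snd ℝ _ _ ∘ₗ P ∘ₗ LinearMap.inl ℝ _ _
  have hψ : ∀ Z, ψ Z = (P (Z, 0)).2 := fun Z => rfl
  have hψ0 : ψ ≠ 0 := by
    intro h0
    have h1 : (P (p, 0)).2 = 0 := by rw [← hψ, h0]; rfl
    have h2 := hBB _ (hPB (p, 0)) _ (hPB (p, 0))
    rw [h1] at h2
    have h3 : (P (p, 0)).1 = 0 := trace_tmul_eq_zero (by simpa using h2)
    have h4 : P (p, 0) = 0 := Prod.ext h3 h1
    have h5 : (p, q) ∈ B := Submodule.subset_span ⟨1, by simp [a]⟩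
    have h6 := hPo (p, 0) _ h5
    rw [h4, sub_zero, pairForm_apply] at h6
    exact hp0 (trace_tmul_eq_zero (by simpa using h6))
  obtain ⟨k, l, hX⟩ := exists_extr_ne ψ hψ0
  refine ⟨extr ψ k l, hX, fun g => extr_comm ψ k l _ _ fun Z => ?_, ?_, ?_⟩
  · have := hPL g (Z, 0)
    rw [hL, hL] at this
    simp only [mul_zero] at this
    rw [hψ, hψ, this]
  · rw [extr_comm ψ k l p 1 fun Z => by rw [hψ, hPp, hψ, one_mul], one_mul]
  · rw [← extr_comm ψ k l 1 q fun Z => by rw [one_mul, hψ, (hBp _ (hPB _)).2], mul_one]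

end

theorem exists_inv_sqrt {n : ℕ} (X : Matrix (Fin n) (Fin n) ℝ) :
    ∃ s e : Matrix (Fin n) (Fin n) ℝ, sᵀ = s ∧ s * (Xᵀ * X) * s = e ∧ e * e = e ∧
      e * (Xᵀ * X) = Xᵀ * X ∧ ∀ b, (Xᵀ * X) * b = b * (Xᵀ * X) → s * b = b * s := by
  set A := Xᵀ * X with hAdef
  have hps : A.PosSemidef := by
    have := posSemidef_conjTranspose_mul_self X
    simpa [conjTranspose_eq_transpose_of_trivial] using this
  have hA : IsSelfAdjoint A := hps.1
  have hspec : ∀ t ∈ spectrum ℝ A, 0 ≤ t := by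
    intro t ht
    rw [hps.1.spectrum_real_eq_range_eigenvalues] at ht
    obtain ⟨i, rfl⟩ := ht
    exact hps.eigenvalues_nonneg i
  have hfin : (spectrum ℝ A).Finite := by
    rw [hps.1.spectrum_real_eq_range_eigenvalues]
    exact Set.finite_range _
  have hc : ∀ f : ℝ → ℝ, ContinuousOn f (spectrum ℝ A) := fun f => hfin.continuousOn f
  have hid : cfc (fun t : ℝ => t) A = A := cfc_id' ℝ A
  let f : ℝ → ℝ := fun t => (Real.sqrt t)⁻¹
  refine ⟨cfc f A, cfc (fun t => f t * t * f t) A, ?_, ?_, ?_, ?_, ?_⟩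
  · have : IsSelfAdjoint (cfc f A) := cfc_predicate f A
    simpa [IsSelfAdjoint, star_eq_conjTranspose, conjTranspose_eq_transpose_of_trivial] using this
  · rw [cfc_mul (fun t => f t * t) f A (hc _) (hc _), cfc_mul f (fun t => t) A (hc _) (hc _), hid]
  · rw [← cfc_mul _ _ A (hc _) (hc _)]
    refine cfc_congr fun t ht => ?_
    have h0 := hspec t ht
    rcases h0.eq_or_lt with h | h
    · simp [← h]
    · have h1 : Real.sqrt t ≠ 0 := (Real.sqrt_pos.2 h).ne'
      have h2 : f t * t * f t = 1 := by
        have := Real.mul_self_sqrt h0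
        simp only [f]; field_simp; nlinarith
      simp only [h2, mul_one]
  · have : cfc (fun t => f t * t * f t) A * cfc (fun t : ℝ => t) A = cfc (fun t : ℝ => t) A := by
      rw [← cfc_mul _ _ A (hc _) (hc _)]
      refine cfc_congr fun t ht => ?_
      have h0 := hspec t ht
      rcases h0.eq_or_lt with h | h
      · simp [← h]
      · have h1 : Real.sqrt t ≠ 0 := (Real.sqrt_pos.2 h).ne'
        have h2 : f t * t * f t = 1 := by
          have := Real.mul_self_sqrt h0
          simp only [f]; field_simp; nlinarith
        simp only [h2, one_mul]
    rwa [hid] at this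
  · intro b hb
    exact Commute.cfc_real (show Commute A b from hb) f

theorem one_le_trace {n : ℕ} {e : Matrix (Fin n) (Fin n) ℝ} (he : e * e = e) (h0 : e ≠ 0) :
    1 ≤ trace e := by
  have hi : IsIdempotentElem (Matrix.toLin' e) := by
    change Matrix.toLin' e ∘ₗ Matrix.toLin' e = Matrix.toLin' e
    rw [← Matrix.toLin'_mul, he]
  have h1 := (LinearMap.IsIdempotentElem.isProj_range _ hi).trace
  rw [Matrix.trace_toLin'_eq] at h1
  rw [h1]
  have : 0 < Module.finrank ℝ (LinearMap.range (Matrix.toLin' e)) := by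
    rw [Module.finrank_pos_iff, Submodule.nontrivial_iff_ne_bot, Ne, LinearMap.range_eq_bot]
    simpa using h0
  exact_mod_cast this

section
variable {G : Type*} [Group G] {n : ℕ}

theorem exists_partial (u v : G →* orthogonalGroup (Fin n) ℝ)
    (htr : ∀ g, trace (u g).1 = trace (v g).1) (m : ℕ) :
    ∃ T : Matrix (Fin n) (Fin n) ℝ, (∀ g, T * (u g).1 = (v g).1 * T) ∧ T * Tᵀ * T = T ∧
      (Tᵀ * T = 1 ∨ (m : ℝ) ≤ trace (Tᵀ * T)) := by
  have hut : ∀ (w : G →* orthogonalGroup (Fin n) ℝ) g, (w g).1ᵀ = (w g⁻¹).1 := by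
    intro w g; rw [map_inv]; rfl
  have hadj : ∀ T : Matrix (Fin n) (Fin n) ℝ, (∀ g, T * (u g).1 = (v g).1 * T) →
      ∀ g, Tᵀ * (v g).1 = (u g).1 * Tᵀ := by
    intro T h g
    have := congrArg transpose (h g⁻¹)
    rw [transpose_mul, transpose_mul, hut, hut, inv_inv] at this
    exact this.symm
  induction m with
  | zero => exact ⟨0, by simp, by simp, Or.inr (by simp)⟩
  | succ m ih =>
    obtain ⟨T, hT, hTT, h | hm⟩ := ih
    · exact ⟨T, hT, hTT, Or.inl h⟩
    by_cases hp0 : Tᵀ * T = 1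
    · exact ⟨T, hT, hTT, Or.inl hp0⟩
    have hT' := hadj T hT
    have hTT' : Tᵀ * T * Tᵀ = Tᵀ := by
      have := congrArg transpose hTT
      simpa [mul_assoc] using this
    obtain ⟨X, hX0, hX, hXp, hqX⟩ := exists_intertwiner u v (1 - Tᵀ * T) (1 - T * Tᵀ)
      (fun h => hp0 (sub_eq_zero.1 h).symm)
      (by rw [sub_mul, one_mul, mul_sub, mul_one, ← mul_assoc, hTT']; simp)
      (by simp)
      (by rw [sub_mul, one_mul, mul_sub, mul_one, ← mul_assoc, hTT]; simp)
      (by simp)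
      (fun g => by rw [sub_mul, one_mul, mul_sub, mul_one, mul_assoc, hT, ← mul_assoc, hT',
        mul_assoc])
      (fun g => by rw [sub_mul, one_mul, mul_sub, mul_one, mul_assoc, hT', ← mul_assoc, hT,
        mul_assoc])
      (fun g => by
        rw [sub_mul, sub_mul, one_mul, one_mul, trace_sub, trace_sub, htr, mul_assoc Tᵀ, hT,
          trace_mul_comm Tᵀ, mul_assoc T, hT', ← mul_assoc, hT])
    have hX' := hadj X hX
    obtain ⟨s, e, hs, hse, hee, heA, hcomm⟩ := exists_inv_sqrt X
    have hXT : X * Tᵀ = 0 := by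
      rw [← hXp, mul_assoc, sub_mul, one_mul, hTT', sub_self, mul_zero]
    have hTX : Tᵀ * X = 0 := by
      rw [← hqX, ← mul_assoc, mul_sub, mul_one, ← mul_assoc, hTT', sub_self, zero_mul]
    have hTX' : Xᵀ * T = 0 := by simpa using congrArg transpose hTX
    have hXT' : T * Xᵀ = 0 := by simpa using congrArg transpose hXT
    have hsu : ∀ g, s * (u g).1 = (u g).1 * s := fun g =>
      hcomm _ (by rw [mul_assoc, hX, ← mul_assoc, hX', mul_assoc])
    have hsT : s * (Tᵀ * T) = Tᵀ * T * s := hcomm _ (by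
      rw [mul_assoc, ← mul_assoc X, hXT, ← mul_assoc (Tᵀ * T), mul_assoc Tᵀ, hXT']; simp)
    have hXsT : X * s * Tᵀ = 0 := by
      rw [← hTT', mul_assoc, ← mul_assoc s, hsT, mul_assoc (Tᵀ * T), mul_assoc Tᵀ,
        ← mul_assoc X, hXT, zero_mul]
    have he0 : e ≠ 0 := by
      rintro rfl
      rw [zero_mul] at heA
      exact hX0 (trace_tmul_eq_zero (by rw [← heA]; simp))
    have hS : (X * s)ᵀ * (X * s) = e := by
      rw [transpose_mul, hs, ← hse]; simp only [mul_assoc]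
    have hSe : X * s * e = X * s := by
      have : (X * s * e - X * s)ᵀ * (X * s * e - X * s) = 0 := by
        have het : eᵀ = e := by rw [← hS]; simp
        have e1 : (X * s * e - X * s) = X * s * (e - 1) := by rw [mul_sub, mul_one]
        rw [e1, transpose_mul, mul_assoc, ← mul_assoc (X * s)ᵀ, hS, mul_sub, hee]; simp
      exact sub_eq_zero.1 (trace_tmul_eq_zero (by rw [this]; simp))
    have hTS : Tᵀ * (X * s) = 0 := by rw [← mul_assoc, hTX, zero_mul]
    have hST : (X * s)ᵀ * T = 0 := by simpa using congrArg transpose hTS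
    have hSu : ∀ g, X * s * (u g).1 = (v g).1 * (X * s) := fun g => by
      rw [mul_assoc, hsu, ← mul_assoc, hX, mul_assoc]
    have hTSt : T * (X * s)ᵀ = 0 := by simpa using congrArg transpose hXsT
    generalize X * s = S at hXsT hS hSe hTS hST hSu hTSt
    have hTe : T * e = 0 := by rw [← hS, ← mul_assoc, hTSt, zero_mul]
    have hsum : (T + S)ᵀ * (T + S) = Tᵀ * T + e := by
      rw [transpose_add, add_mul, mul_add, mul_add, hTS, hST, hS, add_zero, zero_add]
    refine ⟨T + S, fun g => by rw [add_mul, mul_add, hT, hSu], ?_, Or.inr ?_⟩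
    · rw [mul_assoc, hsum, add_mul, mul_add, mul_add, hTe, hSe, ← mul_assoc, hTT, ← mul_assoc,
        hXsT, zero_mul, add_zero, zero_add]
    · have := one_le_trace hee he0
      rw [hsum, trace_add]
      push_cast
      linarith

end

end WilsonAux

/-- **Wilson loops determine the diagonal conjugacy class in `O(n)`**
(including the even orthogonal groups `O(2m)`).
If `g, g' : Fin r → O(n)` are such that for every word `w` in the free group on `r`
generators the elements `w(g)` and `w(g')` are conjugate in `O(n)`, then `g` and `g'`
are diagonally conjugate. -/
theorem wilson_words_determine_diagonal_conjugacy_orthogonal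
    (n r : ℕ) (hn : 1 ≤ n) (hr : 1 ≤ r)
    (g g' : Fin r → Matrix.orthogonalGroup (Fin n) ℝ)
    (h : ∀ w : FreeGroup (Fin r), ∃ k : Matrix.orthogonalGroup (Fin n) ℝ,
      FreeGroup.lift g' w = k * FreeGroup.lift g w * k⁻¹) :
    ∃ k : Matrix.orthogonalGroup (Fin n) ℝ, ∀ i : Fin r, g' i = k * g i * k⁻¹ := by
  have htr : ∀ w, Matrix.trace (FreeGroup.lift g w).1 = Matrix.trace (FreeGroup.lift g' w).1 := by
    intro w
    obtain ⟨k, hk⟩ := h w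
    have h1 : (k⁻¹).1 * k.1 = 1 := congrArg Subtype.val (inv_mul_cancel k)
    have h2 : (FreeGroup.lift g' w).1 = k.1 * (FreeGroup.lift g w).1 * (k⁻¹).1 :=
      congrArg Subtype.val hk
    rw [h2, Matrix.trace_mul_comm, ← mul_assoc, h1, one_mul]
  obtain ⟨T, hT, hTT, hor⟩ := WilsonAux.exists_partial (FreeGroup.lift g) (FreeGroup.lift g') htr
    (n + 1)
  have hone : Tᵀ * T = 1 := by
    rcases hor with h1 | h1
    · exact h1
    · exfalso
      have h2 := WilsonAux.trace_tmul_nonneg (1 - Tᵀ * T)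
      have h3 : (1 - Tᵀ * T)ᵀ * (1 - Tᵀ * T) = 1 - Tᵀ * T := by
        have h4 : Tᵀ * T * (Tᵀ * T) = Tᵀ * T := by
          rw [mul_assoc, ← mul_assoc T, hTT]
        simp [sub_mul, mul_sub, h4]
      rw [h3, Matrix.trace_sub, Matrix.trace_one, Fintype.card_fin] at h2
      push_cast at h1
      linarith
  refine ⟨⟨T, (Matrix.mem_orthogonalGroup_iff' _ _).2 hone⟩, fun i => ?_⟩
  rw [eq_mul_inv_iff_mul_eq]
  apply Subtype.ext
  have := hT (FreeGroup.of i)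
  rw [FreeGroup.lift_apply_of, FreeGroup.lift_apply_of] at this
  exact this.symm
end

section
/- Let n ≥ 1 and r ≥ 1, and let g, g' : Fin r → Sp(n). If for every word w ∈ FreeGroup(Fin r) the elements w(g) and w(g') are conjugate in Sp(n), then g and g' are diagonally conjugate, i.e. there exists k ∈ Sp(n) such that g'(i) = k · g(i) · k⁻¹ for all i. -/
open scoped Matrix

/-- The standard skew-symmetric matrix `J = [[0, Iₙ], [-Iₙ, 0]]` of size `2n`. -/
def sympJ (n : ℕ) : Matrix (Fin (2 * n)) (Fin (2 * n)) ℂ :=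
  fun i j => if (i : ℕ) + n = (j : ℕ) then 1 else if (j : ℕ) + n = (i : ℕ) then -1 else 0

/-- The compact symplectic group `Sp(n) = U(2n) ∩ Sp_{2n}(ℂ)`, as the subgroup of the
unitary group `U(2n)` consisting of the matrices `g` with `gᵀ * J * g = J`. -/
def Sp (n : ℕ) : Subgroup (Matrix.unitaryGroup (Fin (2 * n)) ℂ) where
  carrier := {g | (g : Matrix (Fin (2 * n)) (Fin (2 * n)) ℂ)ᵀ * sympJ n
    * (g : Matrix (Fin (2 * n)) (Fin (2 * n)) ℂ) = sympJ n}
  one_mem' := by simp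
  mul_mem' := by
    intro a b ha hb
    simp only [Set.mem_setOf_eq, Matrix.UnitaryGroup.mul_val, Matrix.transpose_mul] at *
    calc (b : Matrix (Fin (2 * n)) (Fin (2 * n)) ℂ)ᵀ * (a : Matrix _ _ ℂ)ᵀ * sympJ n
          * ((a : Matrix _ _ ℂ) * (b : Matrix _ _ ℂ))
        = (b : Matrix _ _ ℂ)ᵀ * ((a : Matrix _ _ ℂ)ᵀ * sympJ n * (a : Matrix _ _ ℂ))
          * (b : Matrix _ _ ℂ) := by
          simp only [Matrix.mul_assoc]
      _ = sympJ n := by rw [ha, hb]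
  inv_mem' := by
    intro a ha
    simp only [Set.mem_setOf_eq] at *
    have h1 : (a : Matrix (Fin (2 * n)) (Fin (2 * n)) ℂ)
        * ((a⁻¹ : Matrix.unitaryGroup (Fin (2 * n)) ℂ) : Matrix (Fin (2 * n)) (Fin (2 * n)) ℂ)
        = 1 := by
      rw [← Matrix.UnitaryGroup.mul_val, mul_inv_cancel, Matrix.UnitaryGroup.one_val]
    calc ((a⁻¹ : Matrix.unitaryGroup (Fin (2 * n)) ℂ) : Matrix (Fin (2 * n)) (Fin (2 * n)) ℂ)ᵀ
          * sympJ n * ((a⁻¹ : Matrix.unitaryGroup (Fin (2 * n)) ℂ) : Matrix _ _ ℂ)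
        = ((a⁻¹ : Matrix.unitaryGroup (Fin (2 * n)) ℂ) : Matrix _ _ ℂ)ᵀ
          * ((a : Matrix _ _ ℂ)ᵀ * sympJ n * (a : Matrix _ _ ℂ))
          * ((a⁻¹ : Matrix.unitaryGroup (Fin (2 * n)) ℂ) : Matrix _ _ ℂ) := by rw [ha]
      _ = ((a : Matrix _ _ ℂ)
            * ((a⁻¹ : Matrix.unitaryGroup (Fin (2 * n)) ℂ) : Matrix _ _ ℂ))ᵀ
          * sympJ n
          * ((a : Matrix _ _ ℂ)
            * ((a⁻¹ : Matrix.unitaryGroup (Fin (2 * n)) ℂ) : Matrix _ _ ℂ)) := by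
          simp only [Matrix.transpose_mul, Matrix.mul_assoc]
      _ = sympJ n := by rw [h1]; simp


section CharTheory
set_option linter.unusedSectionVars false
universe u
variable {k : Type*} [Field k] [CharZero k] {R : Type*} [Ring R] [Algebra k R]

lemma wl_trace_equiv {M N : Type u} [AddCommGroup M] [Module k M] [Module R M]
    [IsScalarTower k R M] [AddCommGroup N] [Module k N] [Module R N]
    [IsScalarTower k R N] (e : M ≃ₗ[R] N) (r : R) :
    LinearMap.trace k M (Algebra.lsmul k k M r) = LinearMap.trace k N (Algebra.lsmul k k N r) := by
  rw [← LinearMap.trace_conj' (Algebra.lsmul k k M r) (e.restrictScalars k)]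
  congr 1
  ext x
  simp [LinearEquiv.conj_apply]

lemma wl_trace_prod {M N : Type u} [AddCommGroup M] [Module k M] [Module R M]
    [IsScalarTower k R M] [AddCommGroup N] [Module k N] [Module R N]
    [IsScalarTower k R N] [FiniteDimensional k M] [FiniteDimensional k N] (r : R) :
    LinearMap.trace k (M × N) (Algebra.lsmul k k (M × N) r) =
    LinearMap.trace k M (Algebra.lsmul k k M r) + LinearMap.trace k N (Algebra.lsmul k k N r) := by
  rw [← LinearMap.trace_prodMap']
  congr 1

lemma wl_ss_prod {M N : Type u} [AddCommGroup M] [Module R M] [AddCommGroup N] [Module R N]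
    [IsSemisimpleModule R M] [IsSemisimpleModule R N] : IsSemisimpleModule R (M × N) := by
  have h1 : IsSemisimpleModule R (LinearMap.range (LinearMap.inl R M N)) :=
    IsSemisimpleModule.congr (LinearEquiv.ofInjective _ LinearMap.inl_injective).symm
  have h2 : IsSemisimpleModule R (LinearMap.range (LinearMap.inr R M N)) :=
    IsSemisimpleModule.congr (LinearEquiv.ofInjective _ LinearMap.inr_injective).symm
  have h3 : IsSemisimpleModule R
    ↥(LinearMap.range (LinearMap.inl R M N) ⊔ LinearMap.range (LinearMap.inr R M N)) :=
    IsSemisimpleModule.sup h1 h2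
  rw [LinearMap.sup_range_inl_inr] at h3
  exact IsSemisimpleModule.congr (Submodule.topEquiv (R := R) (M := M × N)).symm

lemma wl_fd_sub {M : Type u} [AddCommGroup M] [Module k M] [Module R M]
    [IsScalarTower k R M] [FiniteDimensional k M] (P : Submodule R M) : FiniteDimensional k P :=
  FiniteDimensional.of_injective (P.subtype.restrictScalars k) P.injective_subtype

lemma wl_exists_hom {M N : Type u} [AddCommGroup M] [Module k M] [Module R M]
    [IsScalarTower k R M] [AddCommGroup N] [Module k N] [Module R N]
    [IsScalarTower k R N] [FiniteDimensional k M] [FiniteDimensional k N]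
    [IsSemisimpleModule R M] [IsSemisimpleModule R N] [Nontrivial M]
    (h : ∀ r : R, LinearMap.trace k M (Algebra.lsmul k k M r)
      = LinearMap.trace k N (Algebra.lsmul k k N r)) :
    (∃ f : M →ₗ[R] N, f ≠ 0) ∨ (∃ f : N →ₗ[R] M, f ≠ 0) := by
  by_contra! hc
  obtain ⟨h1, h2⟩ := hc
  let F : Module.End (Module.End R (M × N)) (M × N) :=
    { toFun := fun x => (x.1, 0)
      map_add' := by intro x y; simp
      map_smul' := by
        rintro φ ⟨x, y⟩
        have e1 := LinearMap.congr_fun (h1 (LinearMap.snd R M N ∘ₗ φ ∘ₗ LinearMap.inl R M N)) x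
        have e2 := LinearMap.congr_fun (h2 (LinearMap.fst R M N ∘ₗ φ ∘ₗ LinearMap.inr R M N)) y
        have e3 : φ (x, y) = φ (x, 0) + φ (0, y) := by rw [← map_add]; simp
        simp at e1 e2
        ext
        · simp [e3, e2]
        · simp [e1] }
  classical
  have := wl_ss_prod (R := R) (M := M) (N := N)
  let b := Module.finBasis k (M × N)
  obtain ⟨r, hr⟩ := jacobson_density F (Finset.univ.image b)
  have hF : Algebra.lsmul k k (M × N) r = LinearMap.prodMap LinearMap.id 0 := by
    apply b.ext
    intro i
    have := hr (b i) (by simp)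
    simp [← this, F]
  have hM : Algebra.lsmul k k M r = LinearMap.id := by
    ext x
    have := LinearMap.congr_fun hF (x, 0)
    simpa using congrArg Prod.fst this
  have hN : Algebra.lsmul k k N r = 0 := by
    ext x
    have := LinearMap.congr_fun hF (0, x)
    simpa using congrArg Prod.snd this
  have := h r
  rw [hM, hN, LinearMap.trace_id, map_zero] at this
  have h3 := Module.finrank_pos (R := k) (M := M)
  have : Module.finrank k M = 0 := by exact_mod_cast this
  omega

theorem wl_iso_aux (d : ℕ) : ∀ {M N : Type u} [AddCommGroup M] [Module k M] [Module R M]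
    [IsScalarTower k R M] [AddCommGroup N] [Module k N] [Module R N]
    [IsScalarTower k R N] [FiniteDimensional k M] [FiniteDimensional k N]
    [IsSemisimpleModule R M] [IsSemisimpleModule R N]
    (_ : Module.finrank k M + Module.finrank k N ≤ d)
    (_ : ∀ r : R, LinearMap.trace k M (Algebra.lsmul k k M r)
      = LinearMap.trace k N (Algebra.lsmul k k N r)), Nonempty (M ≃ₗ[R] N) := by
  induction d with
  | zero => 
    intro M N _ _ _ _ _ _ _ _ _ _ _ _ hd h
    have h1 : Subsingleton M := Module.finrank_zero_iff (R := k).1 (by omega)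
    have h2 : Subsingleton N := Module.finrank_zero_iff (R := k).1 (by omega)
    exact ⟨0⟩
  | succ d ih =>
    have key : ∀ {M N : Type u} [AddCommGroup M] [Module k M] [Module R M]
        [IsScalarTower k R M] [AddCommGroup N] [Module k N] [Module R N]
        [IsScalarTower k R N] [FiniteDimensional k M] [FiniteDimensional k N]
        [IsSemisimpleModule R M] [IsSemisimpleModule R N]
        (_ : Module.finrank k M + Module.finrank k N ≤ d + 1)
        (_ : ∀ r : R, LinearMap.trace k M (Algebra.lsmul k k M r)
          = LinearMap.trace k N (Algebra.lsmul k k N r)) (f : M →ₗ[R] N) (_ : f ≠ 0),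
          Nonempty (M ≃ₗ[R] N) := by
      intro M N _ _ _ _ _ _ _ _ _ _ _ _ hd h f hf
      obtain ⟨C, hC⟩ := exists_isCompl (LinearMap.ker f)
      obtain ⟨D, hD⟩ := exists_isCompl (LinearMap.range f)
      have i1 := wl_fd_sub (k := k) (LinearMap.ker f)
      have i2 := wl_fd_sub (k := k) C
      have i3 := wl_fd_sub (k := k) (LinearMap.range f)
      have i4 := wl_fd_sub (k := k) D
      let eM := Submodule.prodEquivOfIsCompl _ _ hC
      let eN := Submodule.prodEquivOfIsCompl _ _ hD
      let eC : C ≃ₗ[R] LinearMap.range f :=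
        (Submodule.quotientEquivOfIsCompl _ _ hC).symm.trans f.quotKerEquivRange
      have dM := (eM.restrictScalars k).finrank_eq
      have dN := (eN.restrictScalars k).finrank_eq
      have dC := (eC.restrictScalars k).finrank_eq
      rw [Module.finrank_prod] at dM dN
      have hnt : Nontrivial (LinearMap.range f) := by
        rw [Submodule.nontrivial_iff_ne_bot]
        intro hb
        exact hf (LinearMap.range_eq_bot.1 hb)
      have dpos := Module.finrank_pos (R := k) (M := LinearMap.range f)
      obtain ⟨e⟩ := ih (M := LinearMap.ker f) (N := D) (by omega) (by
        intro r
        have t1 := wl_trace_equiv (k := k) eM r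
        have t2 := wl_trace_equiv (k := k) eN r
        have t3 := wl_trace_equiv (k := k) eC r
        rw [wl_trace_prod] at t1 t2
        have t4 := h r
        rw [← t1, ← t2, t3, add_comm] at t4
        exact add_left_cancel t4)
      exact ⟨eM.symm.trans ((LinearEquiv.prodComm R _ _).trans ((eC.prodCongr e).trans eN))⟩
    intro M N _ _ _ _ _ _ _ _ _ _ _ _ hd h
    rcases subsingleton_or_nontrivial M with hM | hM
    · have h1 := h 1
      rw [map_one (Algebra.lsmul k k M), map_one (Algebra.lsmul k k N), LinearMap.trace_one, LinearMap.trace_one] at h1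
      have h2 : Module.finrank k M = Module.finrank k N := by exact_mod_cast h1
      rw [Module.finrank_zero_of_subsingleton] at h2
      have h3 : Subsingleton N := Module.finrank_zero_iff (R := k).1 h2.symm
      exact ⟨0⟩
    · rcases wl_exists_hom h with ⟨f, hf⟩ | ⟨f, hf⟩
      · exact key hd h f hf
      · obtain ⟨e⟩ := key (by omega) (fun r => (h r).symm) f hf
        exact ⟨e.symm⟩
end CharTheory

section Intertwine
variable {N : ℕ} {Γ : Type} [Group Γ]

noncomputable def wlRep (ρ : Γ →* Matrix (Fin N) (Fin N) ℂ) :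
    Representation ℂ Γ (EuclideanSpace ℂ (Fin N)) :=
  ((Matrix.toLinAlgEquiv (EuclideanSpace.basisFun (Fin N) ℂ).toBasis).toMulEquiv.toMonoidHom).comp ρ

lemma wlRep_apply (ρ : Γ →* Matrix (Fin N) (Fin N) ℂ) (γ : Γ) :
    wlRep ρ γ = Matrix.toLin (EuclideanSpace.basisFun (Fin N) ℂ).toBasis
      (EuclideanSpace.basisFun (Fin N) ℂ).toBasis (ρ γ) := rfl

lemma wlRep_ss (ρ : Γ →* Matrix (Fin N) (Fin N) ℂ) (hρ : ∀ γ, (ρ γ)ᴴ = ρ γ⁻¹) :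
    IsSemisimpleModule (MonoidAlgebra ℂ Γ) (wlRep ρ).asModule := by
  rw [← Representation.isSemisimpleRepresentation_iff_isSemisimpleModule_asModule]
  refine ⟨fun W => ?_⟩
  refine ⟨⟨W.toSubmoduleᗮ, ?_⟩, ?_⟩
  · intro γ v hv
    rw [Submodule.mem_orthogonal] at hv ⊢
    intro u hu
    have h1 : wlRep ρ γ = (wlRep ρ γ⁻¹).adjoint := by
      rw [wlRep_apply, wlRep_apply, ← Matrix.toLin_conjTranspose, hρ, inv_inv]
    rw [h1, LinearMap.adjoint_inner_right]
    exact hv _ (W.apply_mem_toSubmodule _ hu)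
  · have hc := Submodule.isCompl_orthogonal (K := W.toSubmodule)
    constructor
    · rw [disjoint_iff]
      apply Subrepresentation.toSubmodule_injective
      exact hc.inf_eq_bot
    · rw [codisjoint_iff]
      apply Subrepresentation.toSubmodule_injective
      exact hc.sup_eq_top

lemma wlRep_trace_single (ρ : Γ →* Matrix (Fin N) (Fin N) ℂ) (γ : Γ) (c : ℂ) :
    LinearMap.trace ℂ (wlRep ρ).asModule
      (Algebra.lsmul ℂ ℂ (wlRep ρ).asModule (MonoidAlgebra.single γ c)) =
    c * (ρ γ).trace := by
  have h1 : (wlRep ρ).asModuleEquiv.conj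
      (Algebra.lsmul ℂ ℂ (wlRep ρ).asModule (MonoidAlgebra.single γ c)) = c • wlRep ρ γ := by
    ext1 v
    simp only [LinearEquiv.conj_apply, LinearMap.comp_apply, LinearEquiv.coe_coe]
    rw [Algebra.lsmul_coe, Representation.asModuleEquiv_map_smul, Representation.asAlgebraHom_single]
    simp
  rw [← LinearMap.trace_conj' _ (wlRep ρ).asModuleEquiv, h1, map_smul, wlRep_apply,
    Matrix.trace_toLin_eq, smul_eq_mul]

lemma wlRep_trace (ρ ρ' : Γ →* Matrix (Fin N) (Fin N) ℂ) (ht : ∀ γ, (ρ γ).trace = (ρ' γ).trace)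
    (a : MonoidAlgebra ℂ Γ) :
    LinearMap.trace ℂ (wlRep ρ).asModule (Algebra.lsmul ℂ ℂ (wlRep ρ).asModule a) =
    LinearMap.trace ℂ (wlRep ρ').asModule (Algebra.lsmul ℂ ℂ (wlRep ρ').asModule a) := by
  induction a using MonoidAlgebra.induction_linear with
  | zero => simp
  | add x y hx hy =>
    rw [map_add (Algebra.lsmul ℂ ℂ (wlRep ρ).asModule),
      map_add (Algebra.lsmul ℂ ℂ (wlRep ρ').asModule), map_add, map_add, hx, hy]
  | single γ c => rw [wlRep_trace_single, wlRep_trace_single, ht]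

theorem wl_intertwiner (ρ ρ' : Γ →* Matrix (Fin N) (Fin N) ℂ) (hρ : ∀ γ, (ρ γ)ᴴ = ρ γ⁻¹)
    (hρ' : ∀ γ, (ρ' γ)ᴴ = ρ' γ⁻¹) (ht : ∀ γ, (ρ γ).trace = (ρ' γ).trace) :
    ∃ X : Matrix (Fin N) (Fin N) ℂ, IsUnit X ∧ ∀ γ, X * ρ γ = ρ' γ * X := by
  have := wlRep_ss ρ hρ
  have := wlRep_ss ρ' hρ'
  obtain ⟨e⟩ := wl_iso_aux (k := ℂ) (R := MonoidAlgebra ℂ Γ) _ (M := (wlRep ρ).asModule)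
    (N := (wlRep ρ').asModule) le_rfl (wlRep_trace ρ ρ' ht)
  let f : EuclideanSpace ℂ (Fin N) ≃ₗ[ℂ] EuclideanSpace ℂ (Fin N) :=
    (wlRep ρ).asModuleEquiv.symm.trans ((e.restrictScalars ℂ).trans (wlRep ρ').asModuleEquiv)
  let b := (EuclideanSpace.basisFun (Fin N) ℂ).toBasis
  have hf : ∀ γ, f.toLinearMap ∘ₗ wlRep ρ γ = wlRep ρ' γ ∘ₗ f.toLinearMap := by
    intro γ
    ext1 v
    change (wlRep ρ').asModuleEquiv (e ((wlRep ρ).asModuleEquiv.symm (wlRep ρ γ v))) =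
      wlRep ρ' γ ((wlRep ρ').asModuleEquiv (e ((wlRep ρ).asModuleEquiv.symm v)))
    rw [Representation.asModuleEquiv_symm_map_rho, map_smul, Representation.asModuleEquiv_map_smul,
      Representation.asAlgebraHom_of]
  refine ⟨LinearMap.toMatrix b b f.toLinearMap, ?_, ?_⟩
  · refine ⟨⟨_, LinearMap.toMatrix b b f.symm.toLinearMap, ?_, ?_⟩, rfl⟩
    · rw [← LinearMap.toMatrix_comp]; simp
    · rw [← LinearMap.toMatrix_comp]; simp
  · intro γ
    have := congrArg (LinearMap.toMatrix b b) (hf γ)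
    rw [LinearMap.toMatrix_comp b b b, LinearMap.toMatrix_comp b b b, wlRep_apply, wlRep_apply] at this
    simpa [b] using this
end Intertwine

section Symp
open scoped ComplexOrder

lemma wl_JJ (n : ℕ) : sympJ n * sympJ n = -1 := by
  ext i j
  rw [Matrix.mul_apply]
  by_cases hi : (i : ℕ) < n
  · rw [Finset.sum_eq_single (⟨i + n, by omega⟩ : Fin (2 * n))]
    · simp only [sympJ, Matrix.neg_apply, Matrix.one_apply, Fin.ext_iff]
      split_ifs <;> first | omega | simp
    · intro b _ hb
      have hb' : (i : ℕ) + n ≠ b := fun h => hb (Fin.ext h.symm)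
      simp only [sympJ]
      rw [if_neg hb', if_neg (by omega), zero_mul]
    · simp
  · rw [Finset.sum_eq_single (⟨i - n, by omega⟩ : Fin (2 * n))]
    · simp only [sympJ, Matrix.neg_apply, Matrix.one_apply, Fin.ext_iff]
      split_ifs <;> first | omega | simp
    · intro b _ hb
      have hb' : (b : ℕ) + n ≠ i := fun h => hb (Fin.ext (by simp; omega))
      simp only [sympJ]
      rw [if_neg (by omega), if_neg hb', zero_mul]
    · simp

lemma wl_JT (n : ℕ) : (sympJ n)ᵀ = - sympJ n := by
  ext i j
  simp only [sympJ, Matrix.transpose_apply, Matrix.neg_apply]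
  split_ifs <;> first | omega | simp

lemma wl_JH (n : ℕ) : (sympJ n)ᴴ = - sympJ n := by
  ext i j
  simp only [sympJ, Matrix.conjTranspose_apply, Matrix.neg_apply]
  split_ifs <;> first | omega | simp

/-- The quaternionic conjugation `X ↦ -J X̄ J`. -/
noncomputable def wlT (n : ℕ) (X : Matrix (Fin (2 * n)) (Fin (2 * n)) ℂ) :
    Matrix (Fin (2 * n)) (Fin (2 * n)) ℂ := -(sympJ n * Xᴴᵀ * sympJ n)

variable {n : ℕ}

lemma wlT_mul (X Y : Matrix (Fin (2 * n)) (Fin (2 * n)) ℂ) :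
    wlT n (X * Y) = wlT n X * wlT n Y := by
  have : sympJ n * Xᴴᵀ * sympJ n * (sympJ n * Yᴴᵀ * sympJ n)
    = sympJ n * Xᴴᵀ * (sympJ n * sympJ n) * Yᴴᵀ * sympJ n := by simp only [Matrix.mul_assoc]
  simp only [wlT, neg_mul_neg, this, wl_JJ, Matrix.conjTranspose_mul, Matrix.transpose_mul]
  simp [Matrix.mul_assoc]

lemma wlT_add (X Y : Matrix (Fin (2 * n)) (Fin (2 * n)) ℂ) :
    wlT n (X + Y) = wlT n X + wlT n Y := by
  simp [wlT, mul_add, add_mul, add_comm]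

lemma wlT_smul (c : ℂ) (X : Matrix (Fin (2 * n)) (Fin (2 * n)) ℂ) :
    wlT n (c • X) = star c • wlT n X := by
  simp [wlT]

lemma wlT_conjTranspose (X : Matrix (Fin (2 * n)) (Fin (2 * n)) ℂ) :
    wlT n Xᴴ = (wlT n X)ᴴ := by
  have : Xᴴᴴᵀ = Xᴴᵀᴴ := by ext i j; simp
  rw [wlT, wlT, this, Matrix.conjTranspose_neg, Matrix.conjTranspose_mul,
    Matrix.conjTranspose_mul, wl_JH]
  simp [Matrix.mul_assoc]

lemma wlT_wlT (X : Matrix (Fin (2 * n)) (Fin (2 * n)) ℂ) : wlT n (wlT n X) = X := by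
  have hJ : (sympJ n)ᴴᵀ = sympJ n := by rw [wl_JH, Matrix.transpose_neg, wl_JT, neg_neg]
  have hX : Xᴴᵀᴴᵀ = X := by ext i j; simp
  have h1 : (sympJ n * Xᴴᵀ * sympJ n)ᴴᵀ = sympJ n * X * sympJ n := by
    rw [Matrix.conjTranspose_mul, Matrix.conjTranspose_mul, Matrix.transpose_mul,
      Matrix.transpose_mul, hJ, hX]
  have h2 : sympJ n * (sympJ n * X * sympJ n) * sympJ n
    = (sympJ n * sympJ n) * X * (sympJ n * sympJ n) := by simp only [Matrix.mul_assoc]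
  simp only [wlT, Matrix.conjTranspose_neg, Matrix.transpose_neg, h1, mul_neg, neg_mul, h2, wl_JJ]
  simp

lemma wlT_one : wlT n 1 = 1 := by simp [wlT, wl_JJ]

/-- unitary + symplectic implies fixed -/
lemma wlT_of_symp {X : Matrix (Fin (2 * n)) (Fin (2 * n)) ℂ} (h1 : X * Xᴴ = 1)
    (h2 : Xᵀ * sympJ n * X = sympJ n) : wlT n X = X := by
  have h3 : Xᴴᵀ * Xᵀ = 1 := by rw [← Matrix.transpose_mul, h1, Matrix.transpose_one]
  have h4 : Xᴴᵀ * sympJ n = sympJ n * X := by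
    rw [← h2, ← Matrix.mul_assoc, ← Matrix.mul_assoc, h3, h2, Matrix.one_mul]
  rw [wlT, Matrix.mul_assoc, h4, ← Matrix.mul_assoc, wl_JJ]; simp

lemma wlT_symp {X : Matrix (Fin (2 * n)) (Fin (2 * n)) ℂ} (h1 : X * Xᴴ = 1)
    (h2 : wlT n X = X) : Xᵀ * sympJ n * X = sympJ n := by
  have h3 : Xᴴᵀ * Xᵀ = 1 := by rw [← Matrix.transpose_mul, h1, Matrix.transpose_one]
  have h4 := mul_eq_one_comm.1 h3
  have h5 : sympJ n * X = Xᴴᵀ * sympJ n := by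
    conv_lhs => rw [← h2]
    rw [wlT, Matrix.mul_neg, ← Matrix.mul_assoc, ← Matrix.mul_assoc, wl_JJ]; simp
  rw [Matrix.mul_assoc, h5, ← Matrix.mul_assoc, h4, Matrix.one_mul]

lemma wl_sqrt_unique {N : ℕ} {S T : Matrix (Fin N) (Fin N) ℂ} (hS : S.PosSemidef)
    (hT : T.PosSemidef) (h : S * S = T * T) : S = T := by
  open scoped MatrixOrder in
  exact (CFC.sqrt_unique (a := T * T) (b := S) h hS.nonneg).symm.trans
    (CFC.sqrt_unique (a := T * T) (b := T) rfl hT.nonneg)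

lemma wl_sqrt_exists {N : ℕ} {S : Matrix (Fin N) (Fin N) ℂ} (hS : S.PosSemidef) :
    ∃ T : Matrix (Fin N) (Fin N) ℂ, T.PosSemidef ∧ T * T = S := by
  open scoped MatrixOrder in
  exact ⟨CFC.sqrt S, Matrix.nonneg_iff_posSemidef.1 (CFC.sqrt_nonneg S), CFC.sqrt_mul_sqrt_self S hS.nonneg⟩

lemma wlT_posSemidef {S : Matrix (Fin (2 * n)) (Fin (2 * n)) ℂ} (hS : S.PosSemidef) :
    (wlT n S).PosSemidef := by
  obtain ⟨T, hT, rfl⟩ := wl_sqrt_exists hS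
  have : T * T = Tᴴ * T := by rw [hT.isHermitian.eq]
  rw [this, wlT_mul, wlT_conjTranspose]
  exact Matrix.posSemidef_conjTranspose_mul_self _

/-- Rotating by a phase. -/
lemma wl_phase {X : Matrix (Fin (2 * n)) (Fin (2 * n)) ℂ} (hX : IsUnit X) :
    ∃ c : ℂ, IsUnit (c • X + wlT n (c • X)) := by
  obtain ⟨u, rfl⟩ := hX
  let Z : Matrix (Fin (2 * n)) (Fin (2 * n)) ℂ :=
    (u⁻¹ : (Matrix (Fin (2 * n)) (Fin (2 * n)) ℂ)ˣ) * wlT n u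
  have hne : ∀ t : ℝ, (1 - t * Complex.I : ℂ) ≠ 0 := by
    intro t ht
    have := congrArg Complex.re ht
    simp at this
  let m : ℝ → ℂ := fun t => -((1 + t * Complex.I) / (1 - t * Complex.I))
  have hinj : Function.Injective m := by
    intro s t hst
    simp only [m, neg_inj] at hst
    rw [div_eq_div_iff (hne s) (hne t)] at hst
    have := congrArg Complex.im hst
    simp at this
    linarith
  obtain ⟨t, ht⟩ : ∃ t : ℝ, m t ∉ spectrum ℂ Z := by
    by_contra! hc
    exact Set.infinite_univ (α := ℝ)
      (((Matrix.finite_spectrum Z).preimage hinj.injOn).subset fun t _ => hc t)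
  refine ⟨1 + t * Complex.I, ?_⟩
  rw [spectrum.notMem_iff] at ht
  have hu : IsUnit (-(1 - t * Complex.I : ℂ)) := (neg_ne_zero.2 (hne t)).isUnit
  have h1 : IsUnit (-(1 - t * Complex.I : ℂ) • ((u : Matrix (Fin (2 * n)) (Fin (2 * n)) ℂ) *
      (algebraMap ℂ _ (m t) - Z))) := by
    have := (Units.isUnit u).mul ht
    rw [← hu.unit_spec]
    exact (isUnit_smul_iff hu.unit _).2 this
  convert h1 using 1
  have h2 : (u : Matrix (Fin (2 * n)) (Fin (2 * n)) ℂ) * Z = wlT n u := by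
    simp [Z]
  have h3 : -(1 - t * Complex.I : ℂ) * m t = 1 + t * Complex.I := by
    simp only [m]
    field_simp [hne t]
  have h4 : star (1 + t * Complex.I : ℂ) = 1 - t * Complex.I := by
    simp [sub_eq_add_neg]
  rw [Matrix.mul_sub, h2, Algebra.algebraMap_eq_smul_one, Matrix.mul_smul, Matrix.mul_one,
    smul_sub, smul_smul, h3, wlT_smul, h4, neg_smul, sub_neg_eq_add]

theorem wl_main {Γ : Type} [Group Γ] (ρ ρ' : Γ →* Matrix (Fin (2 * n)) (Fin (2 * n)) ℂ)
    (hρ : ∀ γ, (ρ γ)ᴴ = ρ γ⁻¹) (hρ' : ∀ γ, (ρ' γ)ᴴ = ρ' γ⁻¹)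
    (hτ : ∀ γ, wlT n (ρ γ) = ρ γ) (hτ' : ∀ γ, wlT n (ρ' γ) = ρ' γ)
    (ht : ∀ γ, (ρ γ).trace = (ρ' γ).trace) :
    ∃ K : Matrix (Fin (2 * n)) (Fin (2 * n)) ℂ, Kᴴ * K = 1 ∧ wlT n K = K ∧
      ∀ γ, K * ρ γ = ρ' γ * K := by
  obtain ⟨X, hX, hX2⟩ := wl_intertwiner ρ ρ' hρ hρ' ht
  obtain ⟨c, hc⟩ := wl_phase hX
  obtain ⟨Y, hY⟩ : ∃ Y, Y = c • X + wlT n (c • X) := ⟨_, rfl⟩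
  rw [← hY] at hc
  have hYτ : wlT n Y = Y := by rw [hY, wlT_add, wlT_wlT, add_comm]
  have hYρ : ∀ γ, Y * ρ γ = ρ' γ * Y := by
    intro γ
    have h1 : c • X * ρ γ = ρ' γ * (c • X) := by
      rw [Matrix.smul_mul, Matrix.mul_smul, hX2]
    have h2 : wlT n (c • X) * ρ γ = ρ' γ * wlT n (c • X) := by
      have := congrArg (wlT n) h1
      rwa [wlT_mul, wlT_mul, hτ, hτ'] at this
    rw [hY, Matrix.add_mul, Matrix.mul_add, h1, h2]
  have hYρ' : ∀ γ, ρ γ * Yᴴ = Yᴴ * ρ' γ := by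
    intro γ
    have := congrArg Matrix.conjTranspose (hYρ γ⁻¹)
    rwa [Matrix.conjTranspose_mul, Matrix.conjTranspose_mul, hρ, hρ', inv_inv] at this
  obtain ⟨T, hT, hTT⟩ := wl_sqrt_exists (Matrix.posSemidef_conjTranspose_mul_self Y)
  have hTτ : wlT n T = T := by
    refine wl_sqrt_unique (wlT_posSemidef hT) hT ?_
    rw [← wlT_mul, hTT, wlT_mul, wlT_conjTranspose, hYτ]
  have hinv : ∀ γ, ρ γ⁻¹ * ρ γ = 1 := fun γ => by rw [← map_mul]; simp
  have hTρ : ∀ γ, ρ γ * T = T * ρ γ := by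
    intro γ
    have h1 : ρ γ * T * (ρ γ)ᴴ = T := by
      refine wl_sqrt_unique (hT.mul_mul_conjTranspose_same _) hT ?_
      rw [hρ]
      calc ρ γ * T * ρ γ⁻¹ * (ρ γ * T * ρ γ⁻¹) = ρ γ * T * (ρ γ⁻¹ * ρ γ) * T * ρ γ⁻¹ := by
            simp only [Matrix.mul_assoc]
        _ = ρ γ * (Yᴴ * Y) * ρ γ⁻¹ := by rw [hinv, ← hTT]; simp [Matrix.mul_assoc]
        _ = Yᴴ * (ρ' γ * Y) * ρ γ⁻¹ := by
          rw [← Matrix.mul_assoc, hYρ']; simp only [Matrix.mul_assoc]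
        _ = Yᴴ * Y * (ρ γ * ρ γ⁻¹) := by rw [← hYρ]; simp only [Matrix.mul_assoc]
        _ = T * T := by rw [← map_mul, hTT]; simp
    conv_rhs => rw [← h1]
    rw [Matrix.mul_assoc _ _ (ρ γ), hρ, hinv, Matrix.mul_one]
  have hTu : IsUnit T := by
    have h1 : IsUnit (T * T) := by
      rw [hTT]
      exact (hc.star).mul hc
    rw [Matrix.isUnit_iff_isUnit_det] at h1 ⊢
    rw [Matrix.det_mul] at h1
    exact isUnit_of_mul_isUnit_left h1
  obtain ⟨S, hS1, hS2⟩ : ∃ S, S * T = 1 ∧ T * S = 1 := by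
    obtain ⟨u, rfl⟩ := hTu
    exact ⟨(u⁻¹ : (Matrix (Fin (2 * n)) (Fin (2 * n)) ℂ)ˣ), by simp, by simp⟩
  have uniq : ∀ S', S' * T = 1 → S' = S := by
    intro S' h
    calc S' = S' * (T * S) := by rw [hS2, Matrix.mul_one]
      _ = S := by rw [← Matrix.mul_assoc, h, Matrix.one_mul]
  have hSh : Sᴴ = S := by
    apply uniq
    have := congrArg Matrix.conjTranspose hS2
    rwa [Matrix.conjTranspose_mul, hT.isHermitian.eq, Matrix.conjTranspose_one] at this
  have hSτ : wlT n S = S := by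
    apply uniq
    have := congrArg (wlT n) hS1
    rwa [wlT_mul, hTτ, wlT_one] at this
  have hSρ : ∀ γ, S * ρ γ = ρ γ * S := by
    intro γ
    calc S * ρ γ = S * (ρ γ * T) * S := by rw [Matrix.mul_assoc, Matrix.mul_assoc, hS2, Matrix.mul_one]
      _ = (S * T) * ρ γ * S := by rw [hTρ]; simp only [Matrix.mul_assoc]
      _ = ρ γ * S := by rw [hS1, Matrix.one_mul]
  refine ⟨Y * S, ?_, ?_, ?_⟩
  · calc (Y * S)ᴴ * (Y * S) = S * (Yᴴ * Y) * S := by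
          rw [Matrix.conjTranspose_mul, hSh]; simp only [Matrix.mul_assoc]
      _ = (S * T) * (T * S) := by rw [← hTT]; simp only [Matrix.mul_assoc]
      _ = 1 := by rw [hS1, hS2, Matrix.one_mul]
  · rw [wlT_mul, hYτ, hSτ]
  · intro γ
    rw [Matrix.mul_assoc, hSρ, ← Matrix.mul_assoc, hYρ, Matrix.mul_assoc]
end Symp

/-- The inclusion of `Sp n` into matrices. -/
def wlIota (n : ℕ) : Sp n →* Matrix (Fin (2 * n)) (Fin (2 * n)) ℂ where
  toFun x := ((x : Matrix.unitaryGroup (Fin (2 * n)) ℂ) : Matrix (Fin (2 * n)) (Fin (2 * n)) ℂ)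
  map_one' := rfl
  map_mul' _ _ := rfl

lemma wlIota_star {n : ℕ} (x : Sp n) : (wlIota n x)ᴴ = wlIota n x⁻¹ := rfl

lemma wlIota_mul_star {n : ℕ} (x : Sp n) : wlIota n x * (wlIota n x)ᴴ = 1 := by
  rw [wlIota_star, ← map_mul, mul_inv_cancel, map_one]

lemma wlIota_fixed {n : ℕ} (x : Sp n) : wlT n (wlIota n x) = wlIota n x :=
  wlT_of_symp (wlIota_mul_star x) x.2

lemma wlIota_injective {n : ℕ} : Function.Injective (wlIota n) := fun _ _ h =>
  Subtype.ext (Subtype.ext h)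

lemma wl_exists_iota {n : ℕ} {K : Matrix (Fin (2 * n)) (Fin (2 * n)) ℂ} (h1 : K * Kᴴ = 1)
    (h2 : wlT n K = K) : ∃ k : Sp n, wlIota n k = K :=
  ⟨⟨⟨K, Matrix.mem_unitaryGroup_iff.2 h1⟩, wlT_symp h1 h2⟩, rfl⟩

lemma wl_trace_eq {n : ℕ} {x y k : Sp n} (hk : y = k * x * k⁻¹) :
    (wlIota n x).trace = (wlIota n y).trace := by
  have h1 : k⁻¹ * (k * x) = x := inv_mul_cancel_left k x
  rw [hk, map_mul (wlIota n), Matrix.trace_mul_comm, ← map_mul (wlIota n), h1]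

lemma wl_group_aux {G : Type*} [Group G] {x y k : G} (h : k * x = y * k) : y = k * x * k⁻¹ := by
  rw [h, mul_inv_cancel_right]

lemma wl_conj_of_iota {n : ℕ} {x y k : Sp n} (h : wlIota n k * wlIota n x = wlIota n y * wlIota n k) :
    y = k * x * k⁻¹ := by
  have h1 : k * x = y * k := wlIota_injective (by
    rw [map_mul (wlIota n), map_mul (wlIota n), h])
  exact wl_group_aux h1

/-- **Wilson loops determine the diagonal conjugacy class in `Sp(n)`.**
If `g, g' : Fin r → Sp(n)` are such that for every word `w` in the free group on `r`
generators the elements `w(g)` and `w(g')` are conjugate in `Sp(n)`, then `g` and `g'`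
are diagonally conjugate. -/
theorem wilson_words_determine_diagonal_conjugacy_symplectic
    (n r : ℕ) (hn : 1 ≤ n) (hr : 1 ≤ r)
    (g g' : Fin r → Sp n)
    (h : ∀ w : FreeGroup (Fin r), ∃ k : Sp n,
      FreeGroup.lift g' w = k * FreeGroup.lift g w * k⁻¹) :
    ∃ k : Sp n, ∀ i : Fin r, g' i = k * g i * k⁻¹ := by
  obtain ⟨K, hK1, hK2, hK3⟩ := wl_main ((wlIota n).comp (FreeGroup.lift g))
    ((wlIota n).comp (FreeGroup.lift g'))
    (fun γ => by rw [MonoidHom.comp_apply, MonoidHom.comp_apply, map_inv, wlIota_star])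
    (fun γ => by rw [MonoidHom.comp_apply, MonoidHom.comp_apply, map_inv, wlIota_star])
    (fun γ => wlIota_fixed _) (fun γ => wlIota_fixed _) (by
      intro γ
      obtain ⟨k, hk⟩ := h γ
      exact wl_trace_eq hk)
  obtain ⟨k, rfl⟩ := wl_exists_iota (mul_eq_one_comm.1 hK1) hK2
  refine ⟨k, fun i => ?_⟩
  have h3 := hK3 (FreeGroup.of i)
  rw [MonoidHom.comp_apply, MonoidHom.comp_apply, FreeGroup.lift_apply_of,
    FreeGroup.lift_apply_of] at h3
  exact wl_conj_of_iota h3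
end

section
/- Let n ≥ 1 and let Γ = (E, V) be a graph. Let A be the unital ℂ-subalgebra of the algebra of continuous functions U(n)^E → ℂ generated by the Wilson loop functions g ↦ tr(h_l(g)) associated to all loops l in Γ (tr denotes the matrix trace of the natural n×n matrix representation). Then every continuous function f : U(n)^E → ℂ that is invariant under the action of U(n)^V (i.e. f(φ·g) = f(g) for all φ ∈ U(n)^V, g ∈ U(n)^E) lies in the closure of A with respect to the supremum norm. -/
/-- The source of an oriented edge `(e, ε)` in the graph with source and target maps
`s, t : E → V`: for `ε = true` the edge is traversed forwards, for `ε = false` backwards. -/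
def edgeSrc {E V : Type*} (s t : E → V) (x : E × Bool) : V :=
  if x.2 then s x.1 else t x.1

/-- The target of an oriented edge `(e, ε)`. -/
def edgeTgt {E V : Type*} (s t : E → V) (x : E × Bool) : V :=
  if x.2 then t x.1 else s x.1

/-- `l` is a loop based at `v`: a nonempty composable sequence of oriented edges
starting and ending at `v`. -/
def IsLoopAt {E V : Type*} (s t : E → V) (v : V) (l : List (E × Bool)) : Prop :=
  ∃ hne : l ≠ [], l.Chain' (fun x y => edgeTgt s t x = edgeSrc s t y) ∧
    edgeSrc s t (l.head hne) = v ∧ edgeTgt s t (l.getLast hne) = v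

/-- The holonomy of a configuration `g : E → G` along `l = ((e₁,ε₁), …, (e_k,ε_k))`,
namely `g_{e_k}^{ε_k} ⋯ g_{e₁}^{ε₁}`. -/
def holonomy {E G : Type*} [Group G] (g : E → G) (l : List (E × Bool)) : G :=
  (l.reverse.map fun x => if x.2 then g x.1 else (g x.1)⁻¹).prod

/-- The gauge action of `φ : V → G` on a configuration `g : E → G`:
`(φ · g)_e = φ(t(e))⁻¹ * g_e * φ(s(e))`. -/
def gaugeAct {E V G : Type*} [Group G] (s t : E → V) (φ : V → G) (g : E → G) : E → G :=
  fun e => (φ (t e))⁻¹ * g e * φ (s e)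

open Module in
lemma trace_split {H : Type*} [NormedAddCommGroup H] [InnerProductSpace ℂ H]
    [FiniteDimensional ℂ H] (K : Submodule ℂ H) (T : H →ₗ[ℂ] H)
    (h1 : ∀ x ∈ K, T x ∈ K) (h2 : ∀ x ∈ Kᗮ, T x ∈ Kᗮ) :
    LinearMap.trace ℂ H T = LinearMap.trace ℂ K (T.restrict h1) +
      LinearMap.trace ℂ Kᗮ (T.restrict h2) := by
  have hI : DirectSum.IsInternal (fun b : Bool => if b then K else Kᗮ) := by
    rw [DirectSum.isInternal_submodule_iff_isCompl (i := true) (j := false) _ (by simp)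
      (by ext x; cases x <;> simp)]
    simpa using Submodule.isCompl_orthogonal (K := K)
  have hf : ∀ b : Bool, Set.MapsTo T ((if b then K else Kᗮ : Submodule ℂ H) : Set H)
      ((if b then K else Kᗮ : Submodule ℂ H) : Set H) := by
    intro b; cases b
    · exact h2
    · exact h1
  have := LinearMap.trace_eq_sum_trace_restrict hI hf
  rw [this, Fintype.sum_bool]
  rfl

lemma trace_zero_of_star {H : Type*} [NormedAddCommGroup H] [InnerProductSpace ℂ H]
    [FiniteDimensional ℂ H] (S T : H →ₗ[ℂ] H)
    (h : ∀ x y, inner ℂ (T x) y = inner ℂ x (S y))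
    (ht : LinearMap.trace ℂ H (S * T) = 0) : T = 0 := by
  have b := stdOrthonormalBasis ℂ H
  rw [LinearMap.trace_eq_sum_inner _ b] at ht
  have h3 : ∀ i, inner ℂ (b i) ((S * T) (b i)) = ((‖T (b i)‖ ^ 2 : ℝ) : ℂ) := by
    intro i
    rw [Module.End.mul_apply, ← h, inner_self_eq_norm_sq_to_K]
    simp
  simp_rw [h3] at ht
  rw [← Complex.ofReal_sum, Complex.ofReal_eq_zero,
    Finset.sum_eq_zero_iff_of_nonneg (fun i _ => by positivity)] at ht
  refine b.toBasis.ext fun i => ?_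
  simpa using ht i (Finset.mem_univ i)

/-- Two linear maps with equal norms: the induced isometry of ranges. -/
lemma range_isometry {R H H' : Type*} [AddCommGroup R] [Module ℂ R]
    [NormedAddCommGroup H] [InnerProductSpace ℂ H] [NormedAddCommGroup H'] [InnerProductSpace ℂ H']
    (L : R →ₗ[ℂ] H) (L' : R →ₗ[ℂ] H') (h : ∀ a, ‖L a‖ = ‖L' a‖) :
    ∃ (K : Submodule ℂ H) (K' : Submodule ℂ H') (U : K ≃ₗ[ℂ] K'), K = LinearMap.range L ∧
      K' = LinearMap.range L' ∧ ∀ a (h : L a ∈ K), (U ⟨L a, h⟩ : H') = L' a := by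
  have hk : LinearMap.ker L = LinearMap.ker L' := by
    ext a
    rw [LinearMap.mem_ker, LinearMap.mem_ker, ← norm_eq_zero, h, norm_eq_zero]
  refine ⟨_, _, L.quotKerEquivRange.symm.trans
    ((Submodule.quotEquivOfEq _ _ hk).trans L'.quotKerEquivRange), rfl, rfl, fun a _ => ?_⟩
  have : L.quotKerEquivRange.symm ⟨L a, a, rfl⟩ = Submodule.Quotient.mk a := by
    rw [LinearEquiv.symm_apply_eq]; rfl
  simp [this]

/-- Restriction of a representation to an invariant subspace. -/
def restrRep {R H : Type*} [Ring R] [Algebra ℂ R] [AddCommGroup H] [Module ℂ H]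
    (π : R →ₐ[ℂ] Module.End ℂ H) (K : Submodule ℂ H) (hK : ∀ a, ∀ x ∈ K, π a x ∈ K) :
    R →ₐ[ℂ] Module.End ℂ K :=
  AlgHom.ofLinearMap
    { toFun := fun a => (π a).restrict (hK a)
      map_add' := fun a b => by ext x; simp
      map_smul' := fun a b => by ext x; simp }
    (by ext x; simp) (fun a b => by ext x; simp)

lemma restrRep_apply {R H : Type*} [Ring R] [Algebra ℂ R] [AddCommGroup H] [Module ℂ H]
    (π : R →ₐ[ℂ] Module.End ℂ H) (K : Submodule ℂ H) (hK : ∀ a, ∀ x ∈ K, π a x ∈ K) (a : R) :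
    restrRep π K hK a = (π a).restrict (hK a) := rfl

/-- Existence of an element of minimal rank. -/
lemma exists_minimal {R H : Type*} [Ring R] [Algebra ℂ R]
    [NormedAddCommGroup H] [InnerProductSpace ℂ H] [FiniteDimensional ℂ H] [Nontrivial H]
    (st : R → R) (π : R →ₐ[ℂ] Module.End ℂ H)
    (hst : ∀ a x y, inner ℂ (π a x) y = inner ℂ x (π (st a) y)) :
    ∃ p : R, π p ≠ 0 ∧ (∀ x y, inner ℂ (π p x) y = inner ℂ x (π p y)) ∧
      ∀ a, ∃ c : ℂ, π (p * a * p) = π (c • p) := by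
  classical
  have hex : ∃ k : ℕ, ∃ p : R, π p ≠ 0 ∧ Module.finrank ℂ (LinearMap.range (π p)) = k :=
    ⟨_, 1, by simp, rfl⟩
  obtain ⟨q, hq0, hqk⟩ := Nat.find_spec hex
  have hmin : ∀ r, Module.finrank ℂ (LinearMap.range (π r)) <
      Module.finrank ℂ (LinearMap.range (π q)) → π r = 0 := by
    intro r hr
    by_contra h0
    rw [hqk] at hr
    exact Nat.find_min hex hr ⟨r, h0, rfl⟩
  have hp0 : π (st q * q) ≠ 0 := by
    intro h0
    apply hq0
    apply trace_zero_of_star (π (st q)) (π q) (hst q)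
    rw [← map_mul, h0, map_zero]
  have hpr : Module.finrank ℂ (LinearMap.range (π (st q * q))) ≤
      Module.finrank ℂ (LinearMap.range (π q)) := by
    rw [map_mul, Module.End.mul_eq_comp, LinearMap.range_comp]
    exact Submodule.finrank_map_le _ _
  set p := st q * q with hp
  have hmin' : ∀ r, Module.finrank ℂ (LinearMap.range (π r)) <
      Module.finrank ℂ (LinearMap.range (π p)) → π r = 0 := fun r hr => hmin r (hr.trans_le hpr)
  refine ⟨p, hp0, ?_, ?_⟩
  · intro x y
    have e : ∀ x y, inner ℂ (π p x) y = inner ℂ (π q x) (π q y) := by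
      intro x y
      rw [← inner_conj_symm, hp, map_mul, Module.End.mul_apply, ← hst, inner_conj_symm]
    rw [e, ← inner_conj_symm x, e, inner_conj_symm]
  · intro a
    have hinv : ∀ x ∈ LinearMap.range (π p), π (p * a) x ∈ LinearMap.range (π p) := by
      intro x _
      exact ⟨π a x, by simp⟩
    have : Nontrivial (LinearMap.range (π p)) := by
      rw [Submodule.nontrivial_iff_ne_bot]
      simpa [LinearMap.range_eq_bot] using hp0
    obtain ⟨c, hc⟩ := Module.End.exists_eigenvalue ((π (p * a)).restrict hinv)
    obtain ⟨⟨v, w, rfl⟩, hv⟩ := hc.exists_hasEigenvector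
    have hv0 : π p w ≠ 0 := fun h => hv.2 (Subtype.ext h)
    have hv1 : π (p * a) (π p w) = c • π p w := by
      have := congrArg Subtype.val hv.apply_eq_smul
      simpa using this
    refine ⟨c, ?_⟩
    rw [← sub_eq_zero, ← map_sub]
    apply hmin'
    have hlt : LinearMap.ker (π p) < LinearMap.ker (π (p * a * p - c • p)) := by
      refine lt_of_le_of_ne ?_ ?_
      · intro x hx
        rw [LinearMap.mem_ker] at hx ⊢
        simp [hx]
      · intro h
        apply hv0
        rw [← LinearMap.mem_ker, h, LinearMap.mem_ker]
        rw [map_sub, map_mul, map_smul, LinearMap.sub_apply, Module.End.mul_apply, hv1]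
        simp
    have := Submodule.finrank_lt_finrank_of_lt hlt
    have h1 := LinearMap.finrank_range_add_finrank_ker (π p)
    have h2 := LinearMap.finrank_range_add_finrank_ker (π (p * a * p - c • p))
    omega

theorem specht {R : Type*} [Ring R] [Algebra ℂ R] (st : R → R) (N : ℕ) :
    ∀ (H H' : Type) [NormedAddCommGroup H] [InnerProductSpace ℂ H] [FiniteDimensional ℂ H]
      [NormedAddCommGroup H'] [InnerProductSpace ℂ H'] [FiniteDimensional ℂ H']
      (π : R →ₐ[ℂ] Module.End ℂ H) (π' : R →ₐ[ℂ] Module.End ℂ H')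
      (_ : ∀ a x y, inner ℂ (π a x) y = inner ℂ x (π (st a) y))
      (_ : ∀ a x y, inner ℂ (π' a x) y = inner ℂ x (π' (st a) y))
      (_ : ∀ a, LinearMap.trace ℂ H (π a) = LinearMap.trace ℂ H' (π' a))
      (_ : Module.finrank ℂ H ≤ N),
      ∃ U : H →ₗᵢ[ℂ] H', ∀ a x, U (π a x) = π' a (U x) := by
  induction N with
  | zero =>
    intro H H' _ _ _ _ _ _ π π' hst hst' htr hN
    have : Subsingleton H := Module.finrank_zero_iff.mp (Nat.le_zero.mp hN)
    refine ⟨⟨0, fun x => ?_⟩, fun a x => ?_⟩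
    · rw [Subsingleton.elim x 0]; simp
    · rw [Subsingleton.elim x 0]; simp
  | succ N ih =>
    intro H H' _ _ _ _ _ _ π π' hst hst' htr hN
    rcases subsingleton_or_nontrivial H with hs | hs
    · refine ⟨⟨0, fun x => ?_⟩, fun a x => ?_⟩
      · rw [Subsingleton.elim x 0]; simp
      · rw [Subsingleton.elim x 0]; simp
    have hzero : ∀ z, π z = 0 → π' z = 0 := by
      intro z hz
      apply trace_zero_of_star (π' (st z)) (π' z) (hst' z)
      rw [← map_mul, ← htr, map_mul, hz]; simp
    have hzero' : ∀ z, π' z = 0 → π z = 0 := by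
      intro z hz
      apply trace_zero_of_star (π (st z)) (π z) (hst z)
      rw [← map_mul, htr, map_mul, hz]; simp
    obtain ⟨p, hp0, hps, hpm⟩ := exists_minimal st π hst
    choose c hc using hpm
    have hc' : ∀ a, π' (p * a * p) = π' (c a • p) := by
      intro a
      rw [← sub_eq_zero, ← map_sub]
      apply hzero
      rw [map_sub, hc, sub_self]
    have hp0' : π' p ≠ 0 := fun h => hp0 (hzero' _ h)
    have hps' : ∀ x y, inner ℂ (π' p x) y = inner ℂ x (π' p y) := by
      have e : π' (st p) = π' p := by
        rw [← sub_eq_zero, ← map_sub]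
        apply hzero
        rw [map_sub, sub_eq_zero]
        ext y
        refine ext_inner_left ℂ fun x => ?_
        rw [← hst, hps]
      intro x y
      rw [hst', e]
    obtain ⟨w, hw⟩ : ∃ w, π p w ≠ 0 := by
      by_contra! h
      exact hp0 (LinearMap.ext h)
    obtain ⟨w', hw'⟩ : ∃ w, π' p w ≠ 0 := by
      by_contra! h
      exact hp0' (LinearMap.ext h)
    have key : ∀ a, inner ℂ (π p w) (π a (π p w)) = c a * inner ℂ w (π p w) := by
      intro a
      rw [hps, ← Module.End.mul_apply, ← Module.End.mul_apply, ← map_mul, ← map_mul,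
        hc, map_smul, LinearMap.smul_apply, inner_smul_right]
    have key' : ∀ a, inner ℂ (π' p w') (π' a (π' p w')) = c a * inner ℂ w' (π' p w') := by
      intro a
      rw [hps', ← Module.End.mul_apply, ← Module.End.mul_apply, ← map_mul, ← map_mul,
        hc', map_smul, LinearMap.smul_apply, inner_smul_right]
    -- rescale
    obtain ⟨x, y, hx0, hxy⟩ : ∃ (x : H) (y : H'), x ≠ 0 ∧
        ∀ a, inner ℂ x (π a x) = inner ℂ y (π' a y) := by
      refine ⟨((‖π' p w'‖ : ℝ) : ℂ) • π p w, ((‖π p w‖ : ℝ) : ℂ) • π' p w', ?_, ?_⟩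
      · simp [hw, hw']
      · intro a
        have k1 := key 1
        have k1' := key' 1
        simp only [map_one, Module.End.one_apply, inner_self_eq_norm_sq_to_K] at k1 k1'
        simp only [map_smul, inner_smul_left, inner_smul_right, key, key', Complex.conj_ofReal]
        have n1 : c 1 ≠ 0 := by
          intro h
          rw [h, zero_mul] at k1
          simp [hw] at k1
        have : c 1 * (((‖π' p w'‖ : ℝ) : ℂ) ^ 2 * inner ℂ w (π p w)) =
            c 1 * (((‖π p w‖ : ℝ) : ℂ) ^ 2 * inner ℂ w' (π' p w')) := by
          have k2 : ((‖π p w‖ : ℝ) : ℂ) ^ 2 = c 1 * inner ℂ w (π p w) := k1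
          have k2' : ((‖π' p w'‖ : ℝ) : ℂ) ^ 2 = c 1 * inner ℂ w' (π' p w') := k1'
          rw [k2, k2']; ring
        have := mul_left_cancel₀ n1 this
        linear_combination c a * this
    let L : R →ₗ[ℂ] H := (LinearMap.applyₗ x) ∘ₗ π.toLinearMap
    let L' : R →ₗ[ℂ] H' := (LinearMap.applyₗ y) ∘ₗ π'.toLinearMap
    have hL : ∀ a, L a = π a x := fun a => rfl
    have hL' : ∀ a, L' a = π' a y := fun a => rfl
    have hnorm : ∀ a, ‖L a‖ = ‖L' a‖ := by
      intro a
      have : inner ℂ (L a) (L a) = inner ℂ (L' a) (L' a) := by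
        rw [hL, hL', hst, hst', ← Module.End.mul_apply, ← Module.End.mul_apply, ← map_mul,
          ← map_mul, hxy]
      rw [inner_self_eq_norm_sq_to_K, inner_self_eq_norm_sq_to_K] at this
      have h2 : ‖L a‖ ^ 2 = ‖L' a‖ ^ 2 := by exact_mod_cast this
      exact (sq_eq_sq₀ (norm_nonneg _) (norm_nonneg _)).mp h2
    obtain ⟨K, K', U, hK, hK', hU⟩ := range_isometry L L' hnorm
    have hUn : ∀ z, ‖(U z : H')‖ = ‖z‖ := by
      rintro ⟨z, hz⟩
      obtain ⟨a, rfl⟩ : ∃ a, L a = z := by rw [hK] at hz; exact hz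
      rw [hU, ← hnorm]; rfl
    have mK : ∀ a, L a ∈ K := fun a => by rw [hK]; exact ⟨a, rfl⟩
    have mK' : ∀ a, L' a ∈ K' := fun a => by rw [hK']; exact ⟨a, rfl⟩
    have iK : ∀ a, ∀ z ∈ K, π a z ∈ K := by
      intro a z hz
      obtain ⟨b, rfl⟩ : ∃ a, L a = z := by rw [hK] at hz; exact hz
      have := mK (a * b)
      rwa [hL, map_mul] at this
    have iK' : ∀ a, ∀ z ∈ K', π' a z ∈ K' := by
      intro a z hz
      obtain ⟨b, rfl⟩ : ∃ a, L' a = z := by rw [hK'] at hz; exact hz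
      have := mK' (a * b)
      rwa [hL', map_mul] at this
    have oK : ∀ a, ∀ z ∈ Kᗮ, π a z ∈ Kᗮ := by
      intro a z hz u hu
      rw [← inner_conj_symm, hst, inner_conj_symm]
      exact hz _ (iK _ _ hu)
    have oK' : ∀ a, ∀ z ∈ K'ᗮ, π' a z ∈ K'ᗮ := by
      intro a z hz u hu
      rw [← inner_conj_symm, hst', inner_conj_symm]
      exact hz _ (iK' _ _ hu)
    have hUc : ∀ a z, U (⟨π a z.1, iK a z.1 z.2⟩ : K) = (⟨π' a (U z).1, iK' a _ (U z).2⟩ : K') := by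
      rintro a ⟨z, hz⟩
      obtain ⟨b, rfl⟩ : ∃ a, L a = z := by rw [hK] at hz; exact hz
      apply Subtype.ext
      have e : (⟨π a (L b), iK a _ (mK b)⟩ : K) = ⟨L (a * b), mK _⟩ := by
        apply Subtype.ext; simp [hL]
      simp only [e, hU]
      simp [hL']
    have htrK : ∀ a, LinearMap.trace ℂ K ((π a).restrict (iK a)) =
        LinearMap.trace ℂ K' ((π' a).restrict (iK' a)) := by
      intro a
      rw [← LinearMap.trace_conj' ((π a).restrict (iK a)) U]
      congr 1
      ext z
      rw [LinearEquiv.conj_apply_apply]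
      have := hUc a (U.symm z)
      rw [LinearEquiv.apply_symm_apply] at this
      exact congrArg Subtype.val this
    have hxK : x ∈ K := by simpa [hL] using mK 1
    have hKpos : 0 < Module.finrank ℂ K := by
      have : Nontrivial K := by
        rw [Submodule.nontrivial_iff_ne_bot, Submodule.ne_bot_iff]
        exact ⟨x, hxK, hx0⟩
      exact Module.finrank_pos
    have hdim := K.finrank_add_finrank_orthogonal
    obtain ⟨U2, hU2⟩ := ih Kᗮ K'ᗮ (restrRep π Kᗮ oK) (restrRep π' K'ᗮ oK')
      (fun a z u => by simpa [restrRep_apply] using hst a z u)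
      (fun a z u => by simpa [restrRep_apply] using hst' a z u)
      (fun a => by
        have h1 := trace_split K (π a) (iK a) (oK a)
        have h2 := trace_split K' (π' a) (iK' a) (oK' a)
        rw [restrRep_apply, restrRep_apply]
        have h3 := htr a
        rw [h1, h2, htrK] at h3
        exact add_left_cancel h3) (by omega)
    let T : H →ₗ[ℂ] H' :=
      K'.subtype ∘ₗ U.toLinearMap ∘ₗ K.orthogonalProjectionOnto.toLinearMap +
      K'ᗮ.subtype ∘ₗ U2.toLinearMap ∘ₗ Kᗮ.orthogonalProjectionOnto.toLinearMap
    have hT : ∀ (k : K) (o : Kᗮ), T (k + o) = U k + U2 o := by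
      intro k o
      have h1 : K.orthogonalProjectionOnto (o : H) = 0 :=
        Submodule.orthogonalProjectionOnto_apply_of_mem_orthogonal o.2
      have h2 : Kᗮ.orthogonalProjectionOnto (k : H) = 0 :=
        Submodule.orthogonalProjectionOnto_apply_of_mem_orthogonal
          (K.le_orthogonal_orthogonal k.2)
      simp [T, h1, h2]
    have hdec : ∀ z : H, ∃ (k : K) (o : Kᗮ), z = k + o := by
      intro z
      exact ⟨K.orthogonalProjectionOnto z, Kᗮ.orthogonalProjectionOnto z, by simp⟩
    refine ⟨⟨T, fun z => ?_⟩, fun a z => ?_⟩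
    · obtain ⟨k, o, rfl⟩ := hdec z
      rw [hT]
      rw [← sq_eq_sq₀ (norm_nonneg _) (norm_nonneg _), sq, sq,
        norm_add_sq_eq_norm_sq_add_norm_sq_of_inner_eq_zero (𝕜 := ℂ) _ _ ((U2 o).2 _ (U k).2),
        norm_add_sq_eq_norm_sq_add_norm_sq_of_inner_eq_zero (𝕜 := ℂ) _ _ (o.2 _ k.2), hUn]
      have := U2.norm_map o
      have e : ‖(U2 o : H')‖ = ‖(o : H)‖ := this
      rw [e]; rfl
    · obtain ⟨k, o, rfl⟩ := hdec z
      show T _ = π' a (T _)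
      rw [hT, map_add (π a), map_add (π' a)]
      have := hT ⟨π a k, iK a k k.2⟩ ⟨π a o, oK a o o.2⟩
      rw [hUc] at this
      have h2 := congrArg Subtype.val (hU2 a o)
      rw [restrRep_apply, restrRep_apply] at h2
      exact this.trans (congrArg (fun v => π' a (U k : H') + v) h2)

/-- Paths in the graph, possibly empty. -/
def IsPath {E V : Type*} (s t : E → V) : V → List (E × Bool) → V → Prop
  | v, [], w => v = w
  | v, x :: l, w => edgeSrc s t x = v ∧ IsPath s t (edgeTgt s t x) l w

/-- The reversed path. -/
def revPath {E : Type*} (l : List (E × Bool)) : List (E × Bool) :=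
  (l.map fun x => (x.1, !x.2)).reverse

lemma IsPath.append {E V : Type*} {s t : E → V} {l l' : List (E × Bool)} {u v w : V}
    (h : IsPath s t u l v) (h' : IsPath s t v l' w) : IsPath s t u (l ++ l') w := by
  induction l generalizing u with
  | nil => cases h; exact h'
  | cons x l ih => exact ⟨h.1, ih h.2⟩

lemma IsPath.rev {E V : Type*} {s t : E → V} {l : List (E × Bool)} {u v : V}
    (h : IsPath s t u l v) : IsPath s t v (revPath l) u := by
  induction l generalizing u with
  | nil => cases h; rfl
  | cons x l ih =>
    have h1 := ih h.2
    have h2 : IsPath s t (edgeTgt s t x) [(x.1, !x.2)] u := by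
      refine ⟨?_, ?_⟩
      · rcases x with ⟨e, b⟩; cases b <;> simp [edgeSrc, edgeTgt]
      · have := h.1
        show edgeTgt s t _ = u
        rw [← this]
        rcases x with ⟨e, b⟩; cases b <;> simp [edgeSrc, edgeTgt]
    have := h1.append h2
    simpa [revPath] using this

lemma isPath_iff {E V : Type*} {s t : E → V} {l : List (E × Bool)} (hl : l ≠ []) {u v : V} :
    IsPath s t u l v ↔ l.IsChain (fun x y => edgeTgt s t x = edgeSrc s t y) ∧
      edgeSrc s t (l.head hl) = u ∧ edgeTgt s t (l.getLast hl) = v := by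
  induction l generalizing u with
  | nil => exact absurd rfl hl
  | cons x l ih =>
    cases l with
    | nil => simp [IsPath]
    | cons y l =>
      have := ih (by simp) (u := edgeTgt s t x)
      rw [IsPath, this]
      simp only [List.isChain_cons_cons, List.head_cons, List.getLast_cons_cons]
      constructor
      · rintro ⟨h1, h2, h3, h4⟩; exact ⟨⟨h3.symm, h2⟩, h1, h4⟩
      · rintro ⟨⟨h3, h2⟩, h1, h4⟩; exact ⟨h1, h2, h3.symm, h4⟩

lemma isLoopAt_iff {E V : Type*} {s t : E → V} {l : List (E × Bool)} {v : V} :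
    IsLoopAt s t v l ↔ l ≠ [] ∧ IsPath s t v l v := by
  constructor
  · rintro ⟨h, h'⟩; exact ⟨h, (isPath_iff h).2 h'⟩
  · rintro ⟨h, h'⟩; exact ⟨h, (isPath_iff h).1 h'⟩

lemma holonomy_append {E G : Type*} [Group G] (g : E → G) (l l' : List (E × Bool)) :
    holonomy g (l ++ l') = holonomy g l' * holonomy g l := by
  simp [holonomy]

lemma holonomy_rev {E G : Type*} [Group G] (g : E → G) (l : List (E × Bool)) :
    holonomy g (revPath l) = (holonomy g l)⁻¹ := by
  induction l with
  | nil => simp [holonomy, revPath]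
  | cons x l ih =>
    have h1 : revPath (x :: l) = revPath l ++ [(x.1, !x.2)] := by simp [revPath]
    have h2 : x :: l = [x] ++ l := rfl
    rw [h1, h2, holonomy_append, holonomy_append, ih, mul_inv_rev]
    congr 1
    rcases x with ⟨e, b⟩; cases b <;> simp [holonomy]

open Matrix Kronecker in
/-- The matrix form of Specht's theorem for a star-closed algebra of pairs of matrices. -/
lemma specht_matrix {m : Type} [Fintype m] [DecidableEq m]
    (R : Subalgebra ℂ (Matrix m m ℂ × Matrix m m ℂ))
    (hstar : ∀ a ∈ R, star a ∈ R) (htr : ∀ a ∈ R, a.1.trace = a.2.trace) :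
    ∃ M : Matrix m m ℂ, Mᴴ * M = 1 ∧ ∀ a ∈ R, M * a.1 = a.2 * M := by
  let Φ : Matrix m m ℂ →ₐ[ℂ] Module.End ℂ (EuclideanSpace ℂ m) :=
    (Matrix.toLpLinAlgEquiv 2).toAlgHom
  have hΦ : ∀ A, Φ A = Matrix.toEuclideanLin A := fun A => rfl
  have hadj : ∀ (A : Matrix m m ℂ) (x y : EuclideanSpace ℂ m),
      inner ℂ (Φ A x) y = inner ℂ x (Φ (star A) y) := by
    intro A x y
    rw [hΦ, hΦ, Matrix.star_eq_conjTranspose, Matrix.toEuclideanLin_conjTranspose_eq_adjoint,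
      LinearMap.adjoint_inner_right]
  have htrace : ∀ A, LinearMap.trace ℂ _ (Φ A) = A.trace := by
    intro A
    rw [hΦ, Matrix.toEuclideanLin, Matrix.toLpLin_eq_toLin, Matrix.trace_toLin_eq]
  obtain ⟨U, hU⟩ := specht (R := R) (fun a => ⟨star a.1, hstar _ a.2⟩) _
    (EuclideanSpace ℂ m) (EuclideanSpace ℂ m)
    ((Φ.comp (AlgHom.fst ℂ _ _)).comp R.val) ((Φ.comp (AlgHom.snd ℂ _ _)).comp R.val)
    (fun a x y => hadj _ _ _) (fun a x y => hadj _ _ _)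
    (fun a => by
      show LinearMap.trace ℂ _ (Φ a.1.1) = LinearMap.trace ℂ _ (Φ a.1.2)
      rw [htrace, htrace]; exact htr _ a.2) le_rfl
  obtain ⟨M, hM⟩ : ∃ M, Φ M = U.toLinearMap :=
    ⟨(Matrix.toLpLinAlgEquiv 2).symm U.toLinearMap, AlgEquiv.apply_symm_apply _ _⟩
  have hinj : Function.Injective Φ := (Matrix.toLpLinAlgEquiv 2).injective
  refine ⟨M, ?_, fun a ha => ?_⟩
  · apply hinj
    ext1 x
    refine ext_inner_left ℂ fun y => ?_
    rw [map_mul, Module.End.mul_apply, ← Matrix.star_eq_conjTranspose, ← hadj, hM, map_one]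
    exact U.inner_map_map y x
  · apply hinj
    ext1 x
    rw [map_mul, map_mul, hM]
    exact hU ⟨a, ha⟩ x

open Matrix Kronecker in
/-- Wilson loops separate gauge orbits. -/
theorem wilson_separate {n : ℕ} {E V : Type} [Fintype V] (s t : E → V)
    (g g' : E → Matrix.unitaryGroup (Fin n) ℂ)
    (h : ∀ v l, IsPath s t v l v → Matrix.trace (holonomy g l).1 = Matrix.trace (holonomy g' l).1) :
    ∃ φ : V → Matrix.unitaryGroup (Fin n) ℂ, gaugeAct s t φ g = g' := by
  classical
  let B : V → V → Matrix (Fin n) (Fin n) ℂ → Matrix (V × Fin n) (V × Fin n) ℂ :=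
    fun v w X => (Matrix.single v w (1 : ℂ)) ⊗ₖ X
  have hBmul : ∀ u v w X Y, B u v X * B v w Y = B u w (X * Y) := by
    intro u v w X Y
    simp [B, ← Matrix.mul_kronecker_mul]
  have hBmul0 : ∀ u v v' w X Y, v ≠ v' → B u v X * B v' w Y = 0 := by
    intro u v v' w X Y hne
    simp only [B]
    rw [← Matrix.mul_kronecker_mul, Matrix.single_mul_single_of_ne _ _ _ _ hne]
    simp
  have hBstar : ∀ v w X, star (B v w X) = B w v (star X) := by
    intro v w X
    simp [B, Matrix.star_eq_conjTranspose, Matrix.conjTranspose_kronecker,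
      Matrix.conjTranspose_single]
  have hBapp : ∀ v w X a i b j, B v w X (a, i) (b, j) = if v = a ∧ w = b then X i j else 0 := by
    intro v w X a i b j
    simp [B, Matrix.kroneckerMap_apply, Matrix.single_apply]
  let T : Set (Matrix (V × Fin n) (V × Fin n) ℂ × Matrix (V × Fin n) (V × Fin n) ℂ) :=
    {x | ∃ v w l, IsPath s t w l v ∧ x = (B v w (holonomy g l).1, B v w (holonomy g' l).1)}
  let P := Submodule.span ℂ T
  have hone : (1 : Matrix (V × Fin n) (V × Fin n) ℂ × Matrix (V × Fin n) (V × Fin n) ℂ) ∈ P := by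
    have e : (1 : Matrix (V × Fin n) (V × Fin n) ℂ) = ∑ v, B v v 1 := by
      ext ⟨a, i⟩ ⟨b, j⟩
      rw [Matrix.sum_apply]
      simp only [hBapp, Matrix.one_apply, Prod.mk.injEq]
      by_cases hab : a = b
      · subst hab; simp
      · have : ∀ v, ¬ (v = a ∧ v = b) := fun v hv => hab (hv.1.symm.trans hv.2)
        simp [this, hab]
    have e2 : (1 : Matrix (V × Fin n) (V × Fin n) ℂ × Matrix (V × Fin n) (V × Fin n) ℂ) =
        ∑ v, (B v v 1, B v v 1) := by
      apply Prod.ext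
      · rw [Prod.fst_sum]; exact e
      · rw [Prod.snd_sum]; exact e
    rw [e2]
    refine Submodule.sum_mem _ fun v _ => Submodule.subset_span ⟨v, v, [], rfl, ?_⟩
    simp [holonomy]
  have hmul : ∀ x y, x ∈ P → y ∈ P → x * y ∈ P := by
    intro x y hx hy
    induction hx, hy using Submodule.span_induction₂ with
    | mem_mem x y hx hy =>
      obtain ⟨v, w, l, hl, rfl⟩ := hx
      obtain ⟨v', w', l', hl', rfl⟩ := hy
      by_cases hw : w = v'
      · subst hw
        refine Submodule.subset_span ⟨v, w', l' ++ l, hl'.append hl, ?_⟩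
        rw [Prod.mk_mul_mk, hBmul, hBmul, holonomy_append, holonomy_append]
        rfl
      · rw [Prod.mk_mul_mk, hBmul0 _ _ _ _ _ _ hw, hBmul0 _ _ _ _ _ _ hw]
        exact P.zero_mem
    | zero_left y hy => rw [zero_mul]; exact P.zero_mem
    | zero_right x hx => rw [mul_zero]; exact P.zero_mem
    | add_left x y z _ _ _ h1 h2 => rw [add_mul]; exact P.add_mem h1 h2
    | add_right x y z _ _ _ h1 h2 => rw [mul_add]; exact P.add_mem h1 h2
    | smul_left r x y _ _ h1 => rw [smul_mul_assoc]; exact P.smul_mem _ h1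
    | smul_right r x y _ _ h1 => rw [mul_smul_comm]; exact P.smul_mem _ h1
  have hstar : ∀ x ∈ P, star x ∈ P := by
    intro x hx
    induction hx using Submodule.span_induction with
    | mem x hx =>
      obtain ⟨v, w, l, hl, rfl⟩ := hx
      refine Submodule.subset_span ⟨w, v, revPath l, hl.rev, ?_⟩
      rw [Prod.star_def, hBstar, hBstar, holonomy_rev, holonomy_rev]
      rfl
    | zero => rw [star_zero]; exact P.zero_mem
    | add x y _ _ h1 h2 => rw [star_add]; exact P.add_mem h1 h2
    | smul r x _ h1 => rw [star_smul]; exact P.smul_mem _ h1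
  have htr : ∀ x ∈ P, x.1.trace = x.2.trace := by
    intro x hx
    induction hx using Submodule.span_induction with
    | mem x hx =>
      obtain ⟨v, w, l, hl, rfl⟩ := hx
      simp only [B, Matrix.trace_kronecker]
      by_cases hvw : v = w
      · subst hvw; rw [h v l hl]
      · rw [Matrix.trace_single_eq_of_ne _ _ _ hvw]; simp
    | zero => rfl
    | add x y _ _ h1 h2 => simp [h1, h2]
    | smul r x _ h1 => simp [h1]
  obtain ⟨M, hM1, hM⟩ := specht_matrix (P.toSubalgebra hone hmul) hstar htr
  have hMp : ∀ v w l, IsPath s t w l v →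
      M * B v w (holonomy g l).1 = B v w (holonomy g' l).1 * M :=
    fun v w l hl => hM _ (Submodule.subset_span ⟨v, w, l, hl, rfl⟩)
  let C : V → Matrix (Fin n) (Fin n) ℂ := fun v => Matrix.of fun i j => M (v, i) (v, j)
  have hMB : ∀ v w X a i b j, (M * B v w X) (a, i) (b, j) =
      if w = b then ∑ k, M (a, i) (v, k) * X k j else 0 := by
    intro v w X a i b j
    rw [Matrix.mul_apply, Fintype.sum_prod_type]
    simp only [hBapp]
    rw [Finset.sum_eq_single v]
    · by_cases hwb : w = b <;> simp [hwb]
    · intro c _ hc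
      simp [hc.symm]
    · simp
  have hBM : ∀ v w X a i b j, (B v w X * M) (a, i) (b, j) =
      if v = a then ∑ k, X i k * M (w, k) (b, j) else 0 := by
    intro v w X a i b j
    rw [Matrix.mul_apply, Fintype.sum_prod_type]
    simp only [hBapp]
    rw [Finset.sum_eq_single w]
    · by_cases hwb : v = a <;> simp [hwb]
    · intro c _ hc
      simp [hc.symm]
    · simp
  have hoff : ∀ a b i j, a ≠ b → M (a, i) (b, j) = 0 := by
    intro a b i j hab
    have := congrFun (congrFun (hMp b b [] rfl) (a, i)) (b, j)
    rw [hMB, hBM, if_pos rfl, if_neg hab.symm] at this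
    simpa [holonomy, Matrix.one_apply] using this
  have hCu : ∀ v, star (C v) * C v = 1 := by
    intro v
    ext i j
    have := congrFun (congrFun hM1 (v, i)) (v, j)
    rw [Matrix.mul_apply, Fintype.sum_prod_type, Finset.sum_eq_single v] at this
    · rw [Matrix.mul_apply]
      simpa [C, Matrix.star_apply, Matrix.one_apply] using this
    · intro c _ hc
      simp [hoff c v _ _ hc]
    · simp
  have hC : ∀ e, C (t e) * (g e : Matrix (Fin n) (Fin n) ℂ) = g' e * C (s e) := by
    intro e
    ext i j
    have := congrFun (congrFun (hMp (t e) (s e) [(e, true)]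
      ⟨by simp [edgeSrc], by simp [edgeTgt, IsPath]⟩) (t e, i)) (s e, j)
    rw [hMB, hBM, if_pos rfl, if_pos rfl] at this
    simpa [Matrix.mul_apply, C, holonomy] using this
  let Cu : V → Matrix.unitaryGroup (Fin n) ℂ :=
    fun v => ⟨C v, Matrix.mem_unitaryGroup_iff'.2 (hCu v)⟩
  refine ⟨fun v => (Cu v)⁻¹, ?_⟩
  funext e
  rw [gaugeAct, inv_inv, mul_inv_eq_iff_eq_mul]
  exact Subtype.ext (hC e)

lemma compact_unitaryGroup (n : ℕ) : CompactSpace (Matrix.unitaryGroup (Fin n) ℂ) := by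
  apply isCompact_iff_compactSpace.mp
  have hK : IsCompact (Set.univ.pi fun _ : Fin n => Set.univ.pi fun _ : Fin n =>
      Metric.closedBall (0 : ℂ) 1) :=
    isCompact_univ_pi fun _ => isCompact_univ_pi fun _ => isCompact_closedBall _ _
  have hK' : IsCompact {M : Matrix (Fin n) (Fin n) ℂ | ∀ i j, ‖M i j‖ ≤ 1} := by
    have e : {M : Matrix (Fin n) (Fin n) ℂ | ∀ i j, ‖M i j‖ ≤ 1} =
        (Set.univ.pi fun _ : Fin n => Set.univ.pi fun _ : Fin n =>
          Metric.closedBall (0 : ℂ) 1) := by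
      ext M
      constructor
      · intro h i _ j _
        exact mem_closedBall_zero_iff.2 (h i j)
      · intro h i j
        exact mem_closedBall_zero_iff.1 (h i trivial j trivial)
    rw [e]
    exact hK
  refine hK'.of_isClosed_subset ?_ fun M hM i j => entry_norm_bound_of_unitary hM i j
  have : (Matrix.unitaryGroup (Fin n) ℂ : Set (Matrix (Fin n) (Fin n) ℂ)) =
      {M | star M * M = 1} := by
    ext M
    exact Matrix.mem_unitaryGroup_iff'
  rw [this]
  exact isClosed_eq (by fun_prop) continuous_const

/-- Stone-Weierstrass for functions constant on the fibres of a star-closed family. -/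
lemma stone_weierstrass_fibres {X : Type*} [TopologicalSpace X] [CompactSpace X]
    (W : Set C(X, ℂ)) (hW : ∀ F ∈ W, star F ∈ W) (f : C(X, ℂ))
    (hf : ∀ x y, (∀ F ∈ W, F x = F y) → f x = f y) :
    f ∈ closure ((Algebra.adjoin ℂ W : Subalgebra ℂ C(X, ℂ)) : Set C(X, ℂ)) := by
  let S : Setoid X :=
    ⟨fun x y => ∀ F ∈ W, F x = F y, fun _ _ _ => rfl, fun h F hF => (h F hF).symm,
      fun h h' F hF => (h F hF).trans (h' F hF)⟩
  let q : C(X, Quotient S) := ⟨Quotient.mk S, continuous_quotient_mk'⟩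
  have lift : ∀ F : C(X, ℂ), (∀ x y, (∀ F ∈ W, F x = F y) → F x = F y) →
      ∃ F' : C(Quotient S, ℂ), F'.comp q = F := by
    intro F hF
    refine ⟨⟨Quotient.lift F hF, F.continuous.quotient_lift hF⟩, ?_⟩
    ext x; rfl
  have hstar : ∀ F ∈ Algebra.adjoin ℂ W, star F ∈ Algebra.adjoin ℂ W := by
    intro F hF
    have e : star W = W := by
      ext G
      exact ⟨fun h => by simpa using hW _ h, fun h => hW _ h⟩
    rw [← Subalgebra.mem_star_iff, Subalgebra.star_adjoin_comm, e]
    exact hF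
  let Q := ContinuousMap.compStarAlgHom' ℂ ℂ q
  have hQ : ∀ F, Q F = F.comp q := fun F => rfl
  let A : StarSubalgebra ℂ C(Quotient S, ℂ) :=
    { (Algebra.adjoin ℂ W).comap Q.toAlgHom with
      star_mem' := by
        intro F hF
        show Q (star F) ∈ Algebra.adjoin ℂ W
        rw [map_star]
        exact hstar _ hF }
  have hA : ∀ F, F ∈ A ↔ F.comp q ∈ Algebra.adjoin ℂ W := fun F => Iff.rfl
  have hsep : A.SeparatesPoints := by
    intro x y hxy
    induction x using Quotient.inductionOn with | _ x
    induction y using Quotient.inductionOn with | _ y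
    obtain ⟨F, hF, hne⟩ : ∃ F ∈ W, F x ≠ F y := by
      by_contra! hcon
      exact hxy (Quotient.sound hcon)
    obtain ⟨F', hF'⟩ := lift F fun x y h => h F hF
    refine ⟨F', ⟨F', ?_, rfl⟩, ?_⟩
    · show F' ∈ A
      rw [hA, hF']; exact Algebra.subset_adjoin hF
    · rw [← hF'] at hne; exact hne
  have htop := ContinuousMap.starSubalgebra_topologicalClosure_eq_top_of_separatesPoints A hsep
  obtain ⟨f', hf'⟩ := lift f hf
  have hmem : f' ∈ closure (A : Set C(Quotient S, ℂ)) := by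
    rw [← StarSubalgebra.topologicalClosure_coe, htop]; trivial
  have := map_mem_closure (ContinuousMap.continuous_precomp q) hmem
    (t := ((Algebra.adjoin ℂ W : Subalgebra ℂ C(X, ℂ)) : Set C(X, ℂ))) (fun F hF => (hA F).1 hF)
  rw [← hf']
  exact this

/-- **Density of Wilson loops for `U(n)` lattice gauge theory.** Every continuous
gauge-invariant function on the configuration space `U(n)^E` of a graph lies in the
uniform closure of the algebra generated by the Wilson loops `g ↦ tr(h_l(g))`. -/
theorem wilson_loops_dense_unitary
    (n : ℕ) (hn : 1 ≤ n)
    {E V : Type} [Fintype E] [Fintype V] (s t : E → V)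
    (W : Set C((E → Matrix.unitaryGroup (Fin n) ℂ), ℂ))
    (hWdef : W = {F | ∃ (v : V) (l : List (E × Bool)), IsLoopAt s t v l ∧
      ∀ g : E → Matrix.unitaryGroup (Fin n) ℂ,
        F g = Matrix.trace ((holonomy g l : Matrix.unitaryGroup (Fin n) ℂ) :
          Matrix (Fin n) (Fin n) ℂ)})
    (f : C((E → Matrix.unitaryGroup (Fin n) ℂ), ℂ))
    (hf : ∀ (φ : V → Matrix.unitaryGroup (Fin n) ℂ)
      (g : E → Matrix.unitaryGroup (Fin n) ℂ), f (gaugeAct s t φ g) = f g) :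
    f ∈ closure ((Algebra.adjoin ℂ W :
      Subalgebra ℂ C((E → Matrix.unitaryGroup (Fin n) ℂ), ℂ)) :
      Set C((E → Matrix.unitaryGroup (Fin n) ℂ), ℂ)) := by
  have hcompact := compact_unitaryGroup n
  have hmem : ∀ v l, IsLoopAt s t v l → ∃ F ∈ W, ∀ g : E → Matrix.unitaryGroup (Fin n) ℂ,
      F g = Matrix.trace ((holonomy g l : Matrix.unitaryGroup (Fin n) ℂ) :
          Matrix (Fin n) (Fin n) ℂ) := by
    intro v l hl
    have hc : Continuous fun g : E → Matrix.unitaryGroup (Fin n) ℂ =>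
        Matrix.trace ((holonomy g l : Matrix.unitaryGroup (Fin n) ℂ) :
          Matrix (Fin n) (Fin n) ℂ) := by
      refine Continuous.matrix_trace (continuous_subtype_val.comp ?_)
      unfold holonomy
      refine continuous_list_prod _ fun x _ => ?_
      rcases x with ⟨e, b⟩
      cases b
      · exact (continuous_apply e).inv
      · simpa using continuous_apply e
    exact ⟨⟨_, hc⟩, by rw [hWdef]; exact ⟨v, l, hl, fun g => rfl⟩, fun g => rfl⟩
  apply stone_weierstrass_fibres W
  · intro F hF
    rw [hWdef] at hF ⊢
    obtain ⟨v, l, hl, hFl⟩ := hF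
    rw [isLoopAt_iff] at hl
    refine ⟨v, revPath l, isLoopAt_iff.2 ⟨?_, hl.2.rev⟩, fun g => ?_⟩
    · simpa [revPath] using hl.1
    · rw [ContinuousMap.star_apply, hFl, holonomy_rev, ← Matrix.trace_conjTranspose]
      rfl
  · intro g g' hgg
    obtain ⟨φ, hφ⟩ := wilson_separate s t g g' (by
      intro v l hl
      by_cases hl0 : l = []
      · subst hl0; rfl
      · obtain ⟨F, hF, hFl⟩ := hmem v l (isLoopAt_iff.2 ⟨hl0, hl⟩)
        rw [← hFl, ← hFl, hgg F hF])
    rw [← hφ, hf]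
end

section
/- (Schur–Weyl duality, commutant direction.) Let n ≥ 1 and d ≥ 1, and let V = ℂ^n. Every ℂ-linear endomorphism of V^{⊗d} that commutes with u^{⊗d} for every u ∈ U(n) is a ℂ-linear combination of the permutation operators π(σ), σ ∈ S_d. Consequently End_{U(n)}(V^{⊗d}) is spanned as a vector space by {π(σ) : σ ∈ S_d}. -/
open scoped TensorProduct

/-- The permutation operator `π(σ)` on `(ℂ^n)^{⊗d}`, determined by
`π(σ)(v₁ ⊗ ⋯ ⊗ v_d) = v_{σ⁻¹(1)} ⊗ ⋯ ⊗ v_{σ⁻¹(d)}`. -/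
noncomputable def permMap (n d : ℕ) (σ : Equiv.Perm (Fin d)) :
    (⨂[ℂ] _ : Fin d, (Fin n → ℂ)) →ₗ[ℂ] ⨂[ℂ] _ : Fin d, (Fin n → ℂ) :=
  (PiTensorProduct.reindex ℂ (fun _ : Fin d => Fin n → ℂ) σ).toLinearMap

/-- The diagonal action `u^{⊗d}` of a matrix `u` on `(ℂ^n)^{⊗d}`. -/
noncomputable def tensorPowMap (n d : ℕ) (u : Matrix (Fin n) (Fin n) ℂ) :
    (⨂[ℂ] _ : Fin d, (Fin n → ℂ)) →ₗ[ℂ] ⨂[ℂ] _ : Fin d, (Fin n → ℂ) :=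
  PiTensorProduct.map fun _ => Matrix.mulVecLin u

namespace SchurWeylAux

/-- Polarization of a multilinear map vanishing on the diagonal of subset sums. -/
theorem polarize {d : ℕ} {E F : Type*} [AddCommMonoid E] [Module ℂ E] [AddCommMonoid F] [Module ℂ F]
    (T : MultilinearMap ℂ (fun _ : Fin d => E) F) (A : Fin d → E)
    (h : ∀ s : Finset (Fin d), T (fun _ => ∑ j ∈ s, A j) = 0) :
    ∑ σ : Equiv.Perm (Fin d), T (fun i => A (σ i)) = 0 := by
  classical
  have key : ∀ r : Fin d → Fin d,
      (∑ s : Finset (Fin d), if ∀ i, r i ∈ s then (-1 : ℂ) ^ s.card else 0)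
        = if Function.Surjective r then (-1 : ℂ) ^ d else 0 := by
    intro r
    split_ifs with hr
    · rw [Finset.sum_eq_single Finset.univ]
      · simp
      · intro s _ hs
        rw [if_neg]
        intro hi
        apply hs
        ext a
        obtain ⟨i, rfl⟩ := hr a
        simp [hi i]
      · simp
    · simp only [Function.Surjective, not_forall, not_exists] at hr
      obtain ⟨a, ha⟩ := hr
      refine Finset.sum_involution (fun s _ => if a ∈ s then s.erase a else insert a s) ?_ ?_ ?_ ?_
      · intro s _
        by_cases has : a ∈ s
        · have h1 : (∀ i, r i ∈ s.erase a) ↔ ∀ i, r i ∈ s := by simp [ha]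
          simp only [has, if_true, h1]
          have := Finset.card_erase_add_one has
          rw [← this]
          split_ifs <;> simp [pow_succ]
        · have h1 : (∀ i, r i ∈ insert a s) ↔ ∀ i, r i ∈ s := by simp [ha]
          simp only [has, if_false, h1, Finset.card_insert_of_notMem has]
          split_ifs <;> simp [pow_succ]
      · intro s _ _
        by_cases has : a ∈ s
        · simp [has]
        · simp [has]
      · simp
      · intro s _
        by_cases has : a ∈ s
        · simp [has]
        · simp [has]
  have h0 : ∑ s : Finset (Fin d), (-1 : ℂ) ^ s.card • T (fun _ => ∑ j ∈ s, A j) = 0 := by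
    simp [h]
  have h1 : ∑ r : Fin d → Fin d,
      (if Function.Surjective r then (-1 : ℂ) ^ d else 0) • T (fun i => A (r i)) = 0 := by
    rw [← h0]
    simp_rw [← key, Finset.sum_smul]
    rw [Finset.sum_comm]
    refine Finset.sum_congr rfl fun s _ => ?_
    rw [T.map_sum_finset (fun _ => A) (fun _ => s), Finset.smul_sum]
    rw [← Finset.sum_subset (Finset.subset_univ (Fintype.piFinset fun _ => s))]
    · refine Finset.sum_congr rfl fun r hr => ?_
      rw [if_pos]
      simpa using hr
    · intro r _ hr
      rw [if_neg, zero_smul]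
      simpa using hr
  have h2 : ∑ σ : Equiv.Perm (Fin d), (-1 : ℂ) ^ d • T (fun i => A (σ i)) = 0 := by
    rw [← h1]
    refine Fintype.sum_of_injective (fun σ : Equiv.Perm (Fin d) => (σ : Fin d → Fin d))
      DFunLike.coe_injective _ _ ?_ ?_
    · intro r hr
      rw [if_neg, zero_smul]
      intro hs
      exact hr ⟨Equiv.ofBijective r ⟨Finite.injective_iff_surjective.2 hs, hs⟩, rfl⟩
    · intro σ
      rw [if_pos σ.surjective]
  rw [← Finset.smul_sum] at h2
  have h3 := congrArg (fun x => (-1 : ℂ) ^ d • x) h2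
  simp only [smul_smul, ← mul_pow, smul_zero] at h3
  simpa using h3

theorem add_neg_iff {F : Type*} [AddCommMonoid F] [Module ℂ F] (a b : F) :
    a + (-1 : ℂ) • b = 0 ↔ a = b := by
  have hb : (-1 : ℂ) • b + b = 0 := by
    have : ((-1 : ℂ) + 1) • b = 0 := by simp
    rwa [add_smul, one_smul] at this
  constructor
  · intro h
    calc a = a + ((-1 : ℂ) • b + b) := by rw [hb, add_zero]
      _ = b := by rw [← add_assoc, h, zero_add]
  · rintro rfl
    rw [add_comm, hb]

/-- The tensor power space. -/
abbrev W (n d : ℕ) := ⨂[ℂ] _ : Fin d, (Fin n → ℂ)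

/-- The product basis. -/
noncomputable def bas (n d : ℕ) : Module.Basis (Fin d → Fin n) ℂ (W n d) :=
  Basis.piTensorProduct fun _ => Pi.basisFun ℂ (Fin n)

/-- Tensor product of a family of matrices. -/
noncomputable def T (n d : ℕ) :
    MultilinearMap ℂ (fun _ : Fin d => Matrix (Fin n) (Fin n) ℂ) (Module.End ℂ (W n d)) :=
  (PiTensorProduct.mapMultilinear ℂ (fun _ : Fin d => Fin n → ℂ)
    (fun _ : Fin d => Fin n → ℂ)).compLinearMap
    (fun _ => (Matrix.toLin' : Matrix (Fin n) (Fin n) ℂ ≃ₗ[ℂ] _).toLinearMap)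

theorem T_apply (n d : ℕ) (A : Fin d → Matrix (Fin n) (Fin n) ℂ) (v : Fin d → Fin n → ℂ) :
    T n d A (PiTensorProduct.tprod ℂ v) = PiTensorProduct.tprod ℂ (fun i => (A i).mulVec (v i)) := by
  simp [T]

theorem T_const (n d : ℕ) (A : Matrix (Fin n) (Fin n) ℂ) :
    T n d (fun _ => A) = tensorPowMap n d A := by
  apply PiTensorProduct.ext
  refine MultilinearMap.ext fun v => ?_
  simp [T_apply, tensorPowMap]

theorem T_mul (n d : ℕ) (A B : Fin d → Matrix (Fin n) (Fin n) ℂ) :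
    T n d (fun i => A i * B i) = T n d A * T n d B := by
  apply PiTensorProduct.ext
  refine MultilinearMap.ext fun v => ?_
  simp [T_apply]

theorem perm_T (n d : ℕ) (A : Fin d → Matrix (Fin n) (Fin n) ℂ) (σ : Equiv.Perm (Fin d)) :
    permMap n d σ * T n d A * permMap n d σ⁻¹ = T n d (fun i => A (σ⁻¹ i)) := by
  apply PiTensorProduct.ext
  refine MultilinearMap.ext fun v => ?_
  simp [T_apply, permMap, Equiv.Perm.inv_def]

theorem permMap_tprod (n d : ℕ) (σ : Equiv.Perm (Fin d)) (v : Fin d → Fin n → ℂ) :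
    permMap n d σ (PiTensorProduct.tprod ℂ v) = PiTensorProduct.tprod ℂ (fun i => v (σ.symm i)) :=
  PiTensorProduct.reindex_tprod σ v

/-- The representation of the symmetric group. -/
noncomputable def rep (n d : ℕ) : Representation ℂ (Equiv.Perm (Fin d)) (W n d) where
  toFun := permMap n d
  map_one' := by
    apply PiTensorProduct.ext
    refine MultilinearMap.ext fun v => ?_
    simp [permMap, Equiv.Perm.one_def]
  map_mul' σ τ := by
    apply PiTensorProduct.ext
    refine MultilinearMap.ext fun v => ?_
    simp only [LinearMap.compMultilinearMap_apply, Module.End.mul_apply, permMap_tprod]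
    rfl

theorem span_T (n d : ℕ) : Submodule.span ℂ (Set.range (T n d)) = ⊤ := by
  classical
  rw [eq_top_iff, ← ((bas n d).linearMap (bas n d)).span_eq, Submodule.span_le]
  rintro _ ⟨⟨i, j⟩, rfl⟩
  refine Submodule.subset_span ⟨fun k => Matrix.single (i k) (j k) 1, ?_⟩
  refine (bas n d).ext fun l => ?_
  rw [Module.Basis.linearMap_apply_apply]
  simp only [bas, Basis.piTensorProduct_apply, T_apply]
  by_cases h : j = l
  · subst h
    rw [if_pos rfl]
    congr 1
    ext k a
    simp [Matrix.single_apply, Pi.single_apply, eq_comm]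
  · rw [if_neg h]
    obtain ⟨k, hk⟩ := Function.ne_iff.1 h
    refine MultilinearMap.map_coord_zero _ k ?_
    ext a
    simp [Matrix.single_apply, hk]

theorem diag_comm (n d : ℕ) (f : Module.End ℂ (W n d))
    (hf : ∀ u : Matrix.unitaryGroup (Fin n) ℂ,
      Commute f (T n d fun _ => (u : Matrix (Fin n) (Fin n) ℂ))) (z : Fin n → ℂ) :
    Commute f (T n d fun _ => Matrix.diagonal z) := by
  classical
  have h1 : ∀ (z : Fin n → ℂ) (j : Fin d → Fin n), T n d (fun _ => Matrix.diagonal z) (bas n d j)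
      = (∏ k, z (j k)) • bas n d j := by
    intro z j
    simp only [bas, Basis.piTensorProduct_apply, T_apply]
    rw [← MultilinearMap.map_smul_univ]
    congr 1
    ext k a
    simp [Matrix.mulVec_diagonal, Pi.single_apply]
    split_ifs with h
    · rw [h]
    · rfl
  have h2 : ∀ (z : Fin n → ℂ) (i : Fin d → Fin n) (w : W n d),
      (bas n d).coord i (T n d (fun _ => Matrix.diagonal z) w)
      = (∏ k, z (i k)) * (bas n d).coord i w := by
    intro z i w
    have : (bas n d).coord i ∘ₗ (T n d (fun _ => Matrix.diagonal z))
      = (∏ k, z (i k)) • (bas n d).coord i := by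
      refine (bas n d).ext fun j => ?_
      simp only [LinearMap.comp_apply, h1, LinearMap.smul_apply, map_smul]
      by_cases h : j = i
      · subst h; rfl
      · simp [Finsupp.single_apply, h]
    exact LinearMap.congr_fun this w
  have h3 : ∀ z : Fin n → ℂ, Commute f (T n d fun _ => Matrix.diagonal z) ↔
      ∀ i j, (∏ k, z (j k)) * (bas n d).coord i (f (bas n d j)) =
        (∏ k, z (i k)) * (bas n d).coord i (f (bas n d j)) := by
    intro z
    constructor
    · intro h i j
      have := congrArg ((bas n d).coord i) (LinearMap.congr_fun h.eq (bas n d j))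
      rwa [Module.End.mul_apply, Module.End.mul_apply, h1, h2, map_smul, map_smul, smul_eq_mul]
        at this
    · intro h
      refine (bas n d).ext fun j => (bas n d).ext_elem fun i => ?_
      have := h i j
      rw [← h2, ← smul_eq_mul, ← map_smul, ← map_smul, ← h1] at this
      exact this
  rw [h3]
  intro i j
  let p : MvPolynomial (Fin n) ℂ := (∏ k, MvPolynomial.X (j k)) *
    MvPolynomial.C ((bas n d).coord i (f (bas n d j)))
  let q : MvPolynomial (Fin n) ℂ := (∏ k, MvPolynomial.X (i k)) *
    MvPolynomial.C ((bas n d).coord i (f (bas n d j)))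
  have hpq : p = q := by
    refine MvPolynomial.funext_set (fun _ => (Submonoid.unitSphere ℂ : Set ℂ)) ?_ ?_
    · intro _
      have : Infinite Circle := by
        have h1 : Infinite (Set.Ioc (-Real.pi) Real.pi) :=
          Set.Ioc.infinite (by linarith [Real.pi_pos])
        exact Infinite.of_injective _ Circle.argEquiv.symm.injective
      exact Set.infinite_coe_iff.1 this
    · intro x hx
      have hx' : ∀ a, ‖x a‖ = 1 := fun a => by simpa [Submonoid.unitSphere] using hx a trivial
      have hu : Matrix.diagonal x ∈ Matrix.unitaryGroup (Fin n) ℂ := by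
        rw [Matrix.mem_unitaryGroup_iff, Matrix.star_eq_conjTranspose,
          Matrix.diagonal_conjTranspose, Matrix.diagonal_mul_diagonal, ← Matrix.diagonal_one]
        congr 1
        ext a
        simp [Complex.mul_conj, Complex.normSq_eq_norm_sq, hx']
      have := (h3 x).1 (hf ⟨_, hu⟩) i j
      simpa [p, q] using this
  have := congrArg (MvPolynomial.eval z) hpq
  simpa [p, q] using this

theorem herm_comm (n d : ℕ) (f : Module.End ℂ (W n d))
    (hf : ∀ u : Matrix.unitaryGroup (Fin n) ℂ,
      Commute f (T n d fun _ => (u : Matrix (Fin n) (Fin n) ℂ)))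
    (A : Matrix (Fin n) (Fin n) ℂ) (hA : A.IsHermitian) :
    Commute f (T n d fun _ => A) := by
  have h := hA.spectral_theorem
  rw [Unitary.conjStarAlgAut_apply] at h
  rw [h, T_mul, T_mul]
  refine Commute.mul_right (Commute.mul_right (hf _) (diag_comm n d f hf _)) ?_
  exact hf (star hA.eigenvectorUnitary)

theorem sym_comm (n d : ℕ) (f : Module.End ℂ (W n d))
    (hf : ∀ u : Matrix.unitaryGroup (Fin n) ℂ,
      Commute f (T n d fun _ => (u : Matrix (Fin n) (Fin n) ℂ)))
    (A : Fin d → Matrix (Fin n) (Fin n) ℂ) :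
    Commute f (∑ σ : Equiv.Perm (Fin d), T n d (fun i => A (σ i))) := by
  let L : Module.End ℂ (W n d) →ₗ[ℂ] Module.End ℂ (W n d) :=
    LinearMap.mulLeft ℂ f + (-1 : ℂ) • LinearMap.mulRight ℂ f
  have hL : ∀ g, L g = 0 ↔ Commute f g := fun g => by
    exact add_neg_iff (f * g) (g * f)
  let Φ : MultilinearMap ℂ (fun _ : Fin d => Matrix (Fin n) (Fin n) ℂ) (Module.End ℂ (W n d)) :=
    L.compMultilinearMap (T n d)
  let Ψ : MultilinearMap ℂ (fun _ : Fin d => Matrix (Fin n) (Fin n) ℂ) (Module.End ℂ (W n d)) :=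
    ∑ σ : Equiv.Perm (Fin d), Φ.domDomCongr σ
  have hΨ : ∀ A, Ψ A = ∑ σ : Equiv.Perm (Fin d), Φ (fun i => A (σ i)) := by
    intro A
    simp [Ψ]
  have h0 : Ψ = 0 := by
    refine MultilinearMap.ext_of_span_eq_top (γ := fun _ : Fin d => selfAdjoint (Matrix (Fin n) (Fin n) ℂ))
      (g := fun _ a => (a : Matrix (Fin n) (Fin n) ℂ)) ?_ ?_
    · intro _
      change Submodule.span ℂ (Set.range Subtype.val) = ⊤
      rw [Subtype.range_coe]
      exact span_selfAdjoint
    · intro a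
      rw [hΨ]
      refine polarize Φ (fun i => (a i : Matrix (Fin n) (Fin n) ℂ)) fun s => ?_
      refine (hL _).2 (herm_comm n d f hf _ ?_)
      exact (selfAdjoint _).sum_mem fun j _ => (a j).2
  rw [← hL, map_sum]
  have := congrArg (fun M => M A) h0
  simp only [hΨ] at this
  exact this

theorem equiv_comm (n d : ℕ) (f : Module.End ℂ (W n d))
    (hf : ∀ u : Matrix.unitaryGroup (Fin n) ℂ,
      Commute f (T n d fun _ => (u : Matrix (Fin n) (Fin n) ℂ)))
    (g : Module.End ℂ (W n d)) (hg : ∀ σ, Commute g (permMap n d σ)) : Commute f g := by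
  have key : ∀ g : Module.End ℂ (W n d),
      Commute f (∑ σ : Equiv.Perm (Fin d), permMap n d σ * g * permMap n d σ⁻¹) := by
    intro g
    have hg : g ∈ Submodule.span ℂ (Set.range (T n d)) := by rw [span_T]; trivial
    induction hg using Submodule.span_induction with
    | mem x hx =>
      obtain ⟨A, rfl⟩ := hx
      simp_rw [perm_T]
      have := sym_comm n d f hf A
      rw [← Equiv.sum_comp (Equiv.inv _)] at this
      exact this
    | zero => simp
    | add x y _ _ hx hy =>
      simp_rw [mul_add, add_mul, Finset.sum_add_distrib]
      exact hx.add_right hy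
    | smul c x _ hx =>
      simp_rw [mul_smul_comm, smul_mul_assoc, ← Finset.smul_sum]
      exact hx.smul_right c
  have h := key g
  have h1 : ∀ σ : Equiv.Perm (Fin d), permMap n d σ * g * permMap n d σ⁻¹ = g := by
    intro σ
    rw [← (hg σ).eq, mul_assoc]
    have : permMap n d σ * permMap n d σ⁻¹ = 1 := by
      change rep n d σ * rep n d σ⁻¹ = 1
      rw [← map_mul, mul_inv_cancel, map_one]
    rw [this, mul_one]
  simp_rw [h1] at h
  rw [Finset.sum_const, ← Nat.cast_smul_eq_nsmul ℂ] at h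
  have hc : ((Finset.univ : Finset (Equiv.Perm (Fin d))).card : ℂ) ≠ 0 := by
    simp [Fintype.card_perm, Nat.factorial_ne_zero]
  have := h.smul_right (((Finset.univ : Finset (Equiv.Perm (Fin d))).card : ℂ)⁻¹)
  rwa [smul_smul, inv_mul_cancel₀ hc, one_smul] at this

theorem bicomm (n d : ℕ) (f : Module.End ℂ (W n d))
    (hf : ∀ g : Module.End ℂ (W n d), (∀ σ, Commute g (permMap n d σ)) → Commute f g) :
    f ∈ Submodule.span ℂ {h | ∃ σ : Equiv.Perm (Fin d), h = permMap n d σ} := by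
  classical
  let M := (rep n d).asModule
  let e : M ≃ₗ[ℂ] W n d := (rep n d).asModuleEquiv
  have : NeZero (Nat.card (Equiv.Perm (Fin d)) : ℂ) := ⟨by simp [Nat.card_eq_fintype_card, Fintype.card_perm, Nat.factorial_ne_zero]⟩
  have hss : IsSemisimpleModule (MonoidAlgebra ℂ (Equiv.Perm (Fin d))) M := by
    exact (Representation.isSemisimpleRepresentation_iff_isSemisimpleModule_asModule _).1 inferInstance
  let F : Module.End (Module.End (MonoidAlgebra ℂ (Equiv.Perm (Fin d))) M) M :=
    { toFun := fun m => e.symm (f (e m))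
      map_add' := by simp
      map_smul' := by
        intro φ m
        let g : Module.End ℂ (W n d) := e.toLinearMap ∘ₗ (φ.restrictScalars ℂ) ∘ₗ e.symm.toLinearMap
        have hg : ∀ x, g (e x) = e (φ x) := fun x => by simp [g]
        have hc : Commute f g := by
          refine hf g fun σ => ?_
          refine LinearMap.ext fun w => ?_
          obtain ⟨x, rfl⟩ := e.surjective w
          have h1 : permMap n d σ (e x) = e (MonoidAlgebra.of ℂ _ σ • x) := by
            rw [(rep n d).asModuleEquiv_map_smul]; simp; rfl
          have h2 : permMap n d σ (e (φ x)) = e (MonoidAlgebra.of ℂ _ σ • φ x) := by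
            rw [(rep n d).asModuleEquiv_map_smul]; simp; rfl
          rw [Module.End.mul_apply, Module.End.mul_apply, h1, hg, hg, h2, map_smul]
        have := LinearMap.congr_fun hc.eq (e m)
        rw [Module.End.mul_apply, Module.End.mul_apply, hg] at this
        apply e.injective
        simp only [LinearEquiv.apply_symm_apply, Module.End.smul_def, RingHom.id_apply]
        rw [this, ← hg, LinearEquiv.apply_symm_apply] }
  obtain ⟨r, hr⟩ := jacobson_density F (Finset.univ.image fun j => e.symm (bas n d j))
  have hfr : f = (rep n d).asAlgebraHom r := by
    refine (bas n d).ext fun j => ?_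
    have := congrArg e (hr (e.symm (bas n d j)) (by simp))
    rw [(rep n d).asModuleEquiv_map_smul] at this
    simpa [F, e] using this
  rw [hfr, Representation.asAlgebraHom_def, MonoidAlgebra.lift_apply]
  refine Submodule.sum_mem _ fun σ _ => Submodule.smul_mem _ _ (Submodule.subset_span ⟨σ, rfl⟩)

end SchurWeylAux

theorem schur_weyl_commutant_of_unitary
    (n d : ℕ) (hn : 1 ≤ n) (hd : 1 ≤ d)
    (f : (⨂[ℂ] _ : Fin d, (Fin n → ℂ)) →ₗ[ℂ] ⨂[ℂ] _ : Fin d, (Fin n → ℂ))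
    (hf : ∀ u : Matrix.unitaryGroup (Fin n) ℂ,
      f ∘ₗ tensorPowMap n d (u : Matrix (Fin n) (Fin n) ℂ)
        = tensorPowMap n d (u : Matrix (Fin n) (Fin n) ℂ) ∘ₗ f) :
    f ∈ Submodule.span ℂ {h | ∃ σ : Equiv.Perm (Fin d), h = permMap n d σ} := by
  refine SchurWeylAux.bicomm n d f fun g hg => SchurWeylAux.equiv_comm n d f (fun u => ?_) g hg
  rw [SchurWeylAux.T_const]
  exact hf u
end

section
/- Let n ≥ 1 and d ≥ 1, and let V = ℂ^n. Every ℂ-linear endomorphism of V^{⊗d} that commutes with the permutation operator π(σ) for every σ ∈ S_d is a ℂ-linear combination of the operators u^{⊗d} with u ∈ U(n). In other words, the commutant of the symmetric group action on V^{⊗d} equals the linear span of {u^{⊗d} : u ∈ U(n)}. -/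
open scoped TensorProduct

/-- Alternating sum over the finsets containing the range of a non-surjective map vanishes. -/
lemma aux_alt_sum {d : ℕ} (g : Fin d → Fin d) (hg : ¬ Function.Surjective g) :
    ∑ S : Finset (Fin d), (if ∀ i, g i ∈ S then (-1 : ℂ) ^ S.card else 0) = 0 := by
  classical
  simp only [Function.Surjective, not_forall, not_exists] at hg
  obtain ⟨k, hk⟩ := hg
  refine Finset.sum_involution (fun S _ => if k ∈ S then S.erase k else insert k S) ?_ ?_ ?_ ?_
  · intro S _
    by_cases hkS : k ∈ S
    · have h1 : (∀ i, g i ∈ S.erase k) ↔ ∀ i, g i ∈ S := by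
        simp [Finset.mem_erase, hk]
      have h2 : S.card = (S.erase k).card + 1 := (Finset.card_erase_add_one hkS).symm
      simp only [hkS, if_true, h1]
      split_ifs
      · rw [h2, pow_succ]; ring
      · simp
    · have h1 : (∀ i, g i ∈ insert k S) ↔ ∀ i, g i ∈ S := by
        simp [Finset.mem_insert, hk]
      have h2 : (insert k S).card = S.card + 1 := Finset.card_insert_of_notMem hkS
      simp only [hkS, if_false, h1]
      split_ifs
      · rw [h2, pow_succ]; ring
      · simp
  · intro S _ _ h
    by_cases hkS : k ∈ S
    · simp only [hkS, if_true] at h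
      have := Finset.notMem_erase k S
      rw [h] at this
      exact this hkS
    · simp only [hkS, if_false] at h
      exact hkS (h ▸ Finset.mem_insert_self k S)
  · intro S _; exact Finset.mem_univ _
  · intro S _
    by_cases hkS : k ∈ S
    · simp [hkS, Finset.insert_erase]
    · simp [hkS]

/-- Polarization. -/
lemma aux_polarization {d : ℕ} {M N : Type*} [AddCommMonoid M] [Module ℂ M] [AddCommMonoid N]
    [Module ℂ N] (m : MultilinearMap ℂ (fun _ : Fin d => M) N) (A : Fin d → M) :
    ∑ σ : Equiv.Perm (Fin d), m (fun i => A (σ i)) =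
      (-1 : ℂ) ^ d • ∑ S : Finset (Fin d), (-1 : ℂ) ^ S.card • m (fun _ => ∑ i ∈ S, A i) := by
  classical
  have h1 : ∀ S : Finset (Fin d), (-1 : ℂ) ^ S.card • m (fun _ => ∑ i ∈ S, A i) =
      ∑ g : Fin d → Fin d, (if ∀ i, g i ∈ S then (-1 : ℂ) ^ S.card else 0) •
        m (fun i => A (g i)) := by
    intro S
    rw [m.map_sum_finset (fun _ => A) (fun _ => S), Finset.smul_sum]
    simp only [ite_smul, zero_smul]
    rw [← Finset.sum_filter]
    refine Finset.sum_congr ?_ (fun _ _ => rfl)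
    ext g
    simp [Fintype.mem_piFinset]
  simp only [h1]
  rw [Finset.sum_comm]
  simp only [← Finset.sum_smul]
  rw [Finset.smul_sum]
  refine Fintype.sum_of_injective (fun σ : Equiv.Perm (Fin d) => (σ : Fin d → Fin d))
    DFunLike.coe_injective _ _ ?_ ?_
  · intro g hg
    have : ¬ Function.Surjective g := by
      intro hs
      exact hg ⟨Equiv.ofBijective g (Finite.surjective_iff_bijective.mp hs), rfl⟩
    rw [aux_alt_sum g this]; simp
  · intro σ
    have : ∑ S : Finset (Fin d), (if ∀ i, σ i ∈ S then (-1 : ℂ) ^ S.card else 0) = (-1) ^ d := by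
      rw [Finset.sum_eq_single Finset.univ]
      · simp
      · intro S _ hS
        rw [if_neg]
        intro h
        apply hS
        ext x
        simpa using h (σ.symm x)
      · simp
    rw [this, smul_smul, ← mul_pow]; simp

/-- The tensor product of matrices, as a multilinear map. -/
noncomputable def auxMM (n d : ℕ) :
    MultilinearMap ℂ (fun _ : Fin d => Matrix (Fin n) (Fin n) ℂ)
      ((⨂[ℂ] _ : Fin d, (Fin n → ℂ)) →ₗ[ℂ] ⨂[ℂ] _ : Fin d, (Fin n → ℂ)) :=
  (PiTensorProduct.mapMultilinear ℂ (fun _ : Fin d => Fin n → ℂ)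
    (fun _ : Fin d => Fin n → ℂ)).compLinearMap
    (fun _ => (Matrix.toLin' : Matrix (Fin n) (Fin n) ℂ ≃ₗ[ℂ] _).toLinearMap)

lemma auxMM_tprod (n d : ℕ) (A : Fin d → Matrix (Fin n) (Fin n) ℂ) (v : Fin d → Fin n → ℂ) :
    auxMM n d A (PiTensorProduct.tprod ℂ v) =
      PiTensorProduct.tprod ℂ (fun i => (A i).mulVec (v i)) := by
  simp [auxMM]

lemma auxMM_const (n d : ℕ) (u : Matrix (Fin n) (Fin n) ℂ) :
    tensorPowMap n d u = auxMM n d (fun _ => u) := by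
  apply PiTensorProduct.ext
  ext v
  simp [tensorPowMap, auxMM_tprod]

lemma aux_conj (n d : ℕ) (A : Fin d → Matrix (Fin n) (Fin n) ℂ) (σ : Equiv.Perm (Fin d)) :
    permMap n d σ⁻¹ ∘ₗ auxMM n d A ∘ₗ permMap n d σ = auxMM n d (fun i => A (σ i)) := by
  apply PiTensorProduct.ext
  refine MultilinearMap.ext fun v => ?_
  simp only [permMap, LinearMap.compMultilinearMap_apply, LinearMap.comp_apply,
    LinearEquiv.coe_coe, auxMM_tprod]
  rw [PiTensorProduct.reindex_tprod, auxMM_tprod]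
  erw [PiTensorProduct.reindex_tprod]
  congr 1
  ext i
  simp [Equiv.Perm.inv_def]

lemma aux_span (n d : ℕ)
    (f : (⨂[ℂ] _ : Fin d, (Fin n → ℂ)) →ₗ[ℂ] ⨂[ℂ] _ : Fin d, (Fin n → ℂ)) :
    f ∈ Submodule.span ℂ (Set.range (auxMM n d)) := by
  classical
  let b := Basis.piTensorProduct (fun _ : Fin d => Pi.basisFun ℂ (Fin n))
  have key : f = ∑ q, ∑ p, b.repr (f (b q)) p •
      auxMM n d (fun i => Matrix.single (p i) (q i) (1 : ℂ)) := by
    refine b.ext fun r => ?_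
    simp only [LinearMap.sum_apply, LinearMap.smul_apply]
    have h : ∀ p q : Fin d → Fin n, auxMM n d (fun i => Matrix.single (p i) (q i) (1 : ℂ)) (b r) =
        if q = r then b p else 0 := by
      intro p q
      simp only [b, Basis.piTensorProduct_apply, auxMM_tprod]
      split_ifs with hqr
      · subst hqr
        congr 1
        ext i j
        simp [Pi.single_apply, Matrix.single_apply, eq_comm]
      · obtain ⟨i, hi⟩ := Function.ne_iff.mp hqr
        apply MultilinearMap.map_coord_zero _ i
        ext j
        simp [Matrix.single_apply, hi]
    simp only [h]
    rw [Finset.sum_eq_single r]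
    · simp [b.sum_repr]
    · intro q _ hq; simp [hq]
    · simp
  rw [key]
  exact Submodule.sum_mem _ fun q _ => Submodule.sum_mem _ fun p _ =>
    Submodule.smul_mem _ _ (Submodule.subset_span ⟨_, rfl⟩)

lemma aux_sym (n d : ℕ)
    (W : Submodule ℂ ((⨂[ℂ] _ : Fin d, (Fin n → ℂ)) →ₗ[ℂ] ⨂[ℂ] _ : Fin d, (Fin n → ℂ)))
    (hW : ∀ A, tensorPowMap n d A ∈ W)
    (f : (⨂[ℂ] _ : Fin d, (Fin n → ℂ)) →ₗ[ℂ] ⨂[ℂ] _ : Fin d, (Fin n → ℂ)) :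
    ∑ σ : Equiv.Perm (Fin d), permMap n d σ⁻¹ ∘ₗ f ∘ₗ permMap n d σ ∈ W := by
  induction aux_span n d f using Submodule.span_induction with
  | mem x hx =>
    obtain ⟨A, rfl⟩ := hx
    simp only [aux_conj]
    rw [aux_polarization]
    refine W.smul_mem _ (W.sum_mem fun S _ => W.smul_mem _ ?_)
    rw [← auxMM_const]
    exact hW _
  | zero => simp
  | add x y _ _ hx hy =>
    simp only [LinearMap.add_comp, LinearMap.comp_add, Finset.sum_add_distrib]
    exact W.add_mem hx hy
  | smul c x _ hx =>
    simp only [LinearMap.smul_comp, LinearMap.comp_smul, ← Finset.smul_sum]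
    exact W.smul_mem _ hx

lemma aux_sep {V : Type*} [AddCommMonoid V] [Module ℂ V] (W : Submodule ℂ V) {v : V}
    (hv : v ∉ W) : ∃ φ : V →ₗ[ℂ] ℂ, φ v ≠ 0 ∧ ∀ w ∈ W, φ w = 0 := by
  letI : AddCommGroup V := Module.addCommMonoidToAddCommGroup ℂ
  obtain ⟨φ, h1, h2⟩ := Submodule.exists_le_ker_of_notMem hv
  exact ⟨φ, h1, fun w hw => h2 hw⟩

/-- One-variable Zariski density. -/
lemma aux_line (n d : ℕ)
    (W : Submodule ℂ ((⨂[ℂ] _ : Fin d, (Fin n → ℂ)) →ₗ[ℂ] ⨂[ℂ] _ : Fin d, (Fin n → ℂ)))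
    (A B : Matrix (Fin n) (Fin n) ℂ) (Z : Set ℂ) (hZ : Z.Infinite)
    (h : ∀ z ∈ Z, tensorPowMap n d (A + z • B) ∈ W) (z : ℂ) :
    tensorPowMap n d (A + z • B) ∈ W := by
  classical
  by_contra hz
  obtain ⟨φ, hφ, hle⟩ := aux_sep W hz
  let p : Polynomial ℂ := ∑ S : Finset (Fin d),
    Polynomial.C (φ (auxMM n d (S.piecewise (fun _ => B) (fun _ => A)))) *
      Polynomial.X ^ S.card
  have hp : ∀ w : ℂ, p.eval w = φ (tensorPowMap n d (A + w • B)) := by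
    intro w
    have : (fun _ : Fin d => A + w • B) = (fun _ => w • B) + (fun _ => A) := by
      ext; simp [add_comm]
    rw [auxMM_const, this, MultilinearMap.map_add_univ]
    simp only [p, Polynomial.eval_finset_sum, map_sum]
    refine Finset.sum_congr rfl fun S _ => ?_
    have h2 : S.piecewise (fun _ => w • B) (fun _ => A) =
        S.piecewise (fun i => w • (S.piecewise (fun _ => B) (fun _ => A) : Fin d → _) i)
          (S.piecewise (fun _ => B) (fun _ => A)) := by
      ext i : 1
      by_cases hi : i ∈ S <;> simp [hi]
    rw [h2, MultilinearMap.map_piecewise_smul]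
    rw [Polynomial.eval_mul, Polynomial.eval_C, Polynomial.eval_pow, Polynomial.eval_X,
      Finset.prod_const, LinearMap.map_smul, smul_eq_mul, mul_comm]
  have hp0 : p = 0 := by
    apply Polynomial.eq_zero_of_infinite_isRoot
    refine hZ.mono fun w hw => ?_
    simp only [Set.mem_ofPred_eq, Polynomial.IsRoot, hp]
    exact hle _ (h w hw)
  apply hφ
  rw [← hp, hp0]; simp

lemma aux_circle : {z : ℂ | star z * z = 1}.Infinite := by
  have : {z : ℂ | star z * z = 1} = Metric.sphere (0 : ℂ) 1 := by
    ext z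
    simp only [Set.mem_ofPred_eq, mem_sphere_zero_iff_norm]
    rw [← starRingEnd_apply, ← Complex.normSq_eq_conj_mul_self, Complex.normSq_eq_norm_sq]
    norm_cast
    exact pow_eq_one_iff_of_nonneg (norm_nonneg _) two_ne_zero
  rw [this]
  refine (isPreconnected_sphere (E := ℂ) (by simp [Complex.rank_real_complex]) 0 1).infinite_of_nontrivial
    ⟨1, by simp, -1, by simp, ?_⟩
  norm_num

lemma aux_mul (n d : ℕ) (A B : Matrix (Fin n) (Fin n) ℂ) :
    tensorPowMap n d (A * B) = tensorPowMap n d A * tensorPowMap n d B := by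
  simp only [tensorPowMap, Matrix.mulVecLin_mul]
  exact PiTensorProduct.map_comp _ _

/-- Span of unitary tensor powers. -/
noncomputable def auxW (n d : ℕ) :
    Submodule ℂ ((⨂[ℂ] _ : Fin d, (Fin n → ℂ)) →ₗ[ℂ] ⨂[ℂ] _ : Fin d, (Fin n → ℂ)) :=
  Submodule.span ℂ
      {h | ∃ u : Matrix.unitaryGroup (Fin n) ℂ,
        h = tensorPowMap n d (u : Matrix (Fin n) (Fin n) ℂ)}

lemma auxW_conj (n d : ℕ) (u v : Matrix.unitaryGroup (Fin n) ℂ) (f) (hf : f ∈ auxW n d) :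
    tensorPowMap n d u * f * tensorPowMap n d v ∈ auxW n d := by
  unfold auxW at hf
  induction hf using Submodule.span_induction with
  | mem x hx =>
    obtain ⟨w, rfl⟩ := hx
    rw [← aux_mul, ← aux_mul]
    exact Submodule.subset_span ⟨u * w * v, rfl⟩
  | zero => simp
  | add x y _ _ hx hy =>
    rw [mul_add, add_mul]
    exact Submodule.add_mem _ hx hy
  | smul c x _ hx =>
    rw [mul_smul_comm, smul_mul_assoc]
    exact Submodule.smul_mem _ _ hx

lemma auxW_diag (n d : ℕ) (s : Finset (Fin n)) : ∀ t : Fin n → ℂ,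
    (∀ i, i ∉ s → star (t i) * t i = 1) → tensorPowMap n d (Matrix.diagonal t) ∈ auxW n d := by
  classical
  induction s using Finset.induction_on with
  | empty =>
    intro t ht
    refine Submodule.subset_span ⟨⟨Matrix.diagonal t, ?_⟩, rfl⟩
    rw [Matrix.mem_unitaryGroup_iff']
    rw [Matrix.star_eq_conjTranspose, Matrix.diagonal_conjTranspose, Matrix.diagonal_mul_diagonal,
      ← Matrix.diagonal_one]
    congr 1
    ext i
    simpa using ht i (by simp)
  | insert k s hk ih =>
    intro t ht
    have hline : ∀ z : ℂ, Matrix.diagonal (Function.update t k 0) +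
        z • Matrix.diagonal (Pi.single k (1 : ℂ)) = Matrix.diagonal (Function.update t k z) := by
      intro z
      rw [← Matrix.diagonal_smul, Matrix.diagonal_add]
      congr 1
      ext i
      by_cases hi : i = k
      · subst hi; simp
      · simp [hi]
    have := aux_line n d (auxW n d) (Matrix.diagonal (Function.update t k 0))
      (Matrix.diagonal (Pi.single k 1)) _ aux_circle ?_ (t k)
    · rwa [hline, Function.update_eq_self] at this
    · intro z hz
      rw [hline]
      apply ih
      intro i hi
      by_cases hik : i = k
      · subst hik; simpa using hz
      · simpa [hik] using ht i (by simp [hi, hik])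

lemma auxW_herm (n d : ℕ) (A : Matrix (Fin n) (Fin n) ℂ) (hA : A.IsHermitian) :
    tensorPowMap n d A ∈ auxW n d := by
  have h := hA.spectral_theorem
  rw [Unitary.conjStarAlgAut_apply] at h
  rw [h, aux_mul, aux_mul]
  exact auxW_conj n d hA.eigenvectorUnitary (star hA.eigenvectorUnitary) _
    (auxW_diag n d Finset.univ _ (by simp))

lemma auxW_all (n d : ℕ) (A : Matrix (Fin n) (Fin n) ℂ) :
    tensorPowMap n d A ∈ auxW n d := by
  have h := realPart_add_I_smul_imaginaryPart A
  rw [← h]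
  refine aux_line n d _ _ _ (Set.range ((↑) : ℝ → ℂ))
    (Set.infinite_range_of_injective Complex.ofReal_injective) ?_ _
  rintro _ ⟨x, rfl⟩
  apply auxW_herm
  have h1 : IsSelfAdjoint (realPart A : Matrix (Fin n) (Fin n) ℂ) := (realPart A).2
  have h2 : IsSelfAdjoint (imaginaryPart A : Matrix (Fin n) (Fin n) ℂ) := (imaginaryPart A).2
  have h3 : IsSelfAdjoint (x : ℂ) := Complex.conj_ofReal x
  exact h1.add (h3.smul h2)

/-- **Schur–Weyl duality, the other direction.** Every endomorphism of `(ℂ^n)^{⊗d}`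
commuting with all the permutation operators `π(σ)`, `σ ∈ S_d`, is a linear combination
of the operators `u^{⊗d}` with `u ∈ U(n)`. -/
theorem commutant_of_symmetric_group_eq_span_unitary_tensor_powers
    (n d : ℕ) (hn : 1 ≤ n) (hd : 1 ≤ d)
    (f : (⨂[ℂ] _ : Fin d, (Fin n → ℂ)) →ₗ[ℂ] ⨂[ℂ] _ : Fin d, (Fin n → ℂ))
    (hf : ∀ σ : Equiv.Perm (Fin d), f ∘ₗ permMap n d σ = permMap n d σ ∘ₗ f) :
    f ∈ Submodule.span ℂ
      {h | ∃ u : Matrix.unitaryGroup (Fin n) ℂ,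
        h = tensorPowMap n d (u : Matrix (Fin n) (Fin n) ℂ)} := by
  have key := aux_sym n d (auxW n d) (auxW_all n d) f
  have hc : ∀ σ : Equiv.Perm (Fin d), permMap n d σ⁻¹ ∘ₗ f ∘ₗ permMap n d σ = f := by
    intro σ
    rw [hf σ, ← LinearMap.comp_assoc]
    have : permMap n d σ⁻¹ ∘ₗ permMap n d σ = LinearMap.id := by
      have := aux_conj n d (fun _ => 1) σ
      have h1 : auxMM n d (fun _ => 1) = LinearMap.id := by
        rw [← auxMM_const]
        simp only [tensorPowMap, Matrix.mulVecLin_one]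
        exact PiTensorProduct.map_id
      rwa [h1, LinearMap.id_comp] at this
    rw [this, LinearMap.id_comp]
  simp only [hc, Finset.sum_const] at key
  have hne : ((Finset.univ : Finset (Equiv.Perm (Fin d))).card : ℂ) ≠ 0 := by
    simp [Fintype.card_perm, Nat.factorial_ne_zero]
  rw [← Nat.cast_smul_eq_nsmul ℂ] at key
  exact (Submodule.smul_mem_iff _ hne).mp key
end
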